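/- arXiv:1506.04359 — 2 statements merged into one kernel-verified Lean document; each statement's English description precedes it below -/
import Mathlib

section
/- Let E be a real Hilbert space, c ≥ 1, and 1 < q ≤ 2 with conjugate exponent q* = q/(q−1). Then the function f_q : E^c → ℝ defined by f_q(w) = (1/2)‖w‖_{2,q}² is (1/q*)-strongly convex with respect to the norm ‖·‖_{2,q}: for all x, y ∈ E^c and all α ∈ (0,1), f_q(αx + (1−α)y) ≤ α f_q(x) + (1−α) f_q(y) − (1/(2q*)) α(1−α) ‖x−y‖_{2,q}². -/
/-- The `ℓ_{2,q}` block norm `‖w‖_{2,q} = (Σ_j ‖w_j‖^q)^{1/q}` on `E^c`. -/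
noncomputable def norm2q {E : Type*} [NormedAddCommGroup E] {c : ℕ}
    (q : ℝ) (w : Fin c → E) : ℝ :=
  (∑ j, ‖w j‖ ^ q) ^ (1 / q)

theorem aux_holder {c : ℕ} (p : ℝ) (hp0 : 0 < p) (hp1 : p ≤ 1) (A u : Fin c → ℝ)
    (hA : ∀ j, 0 ≤ A j) (hu : ∀ j, 0 < u j) (hS : 0 < ∑ j, u j ^ p) :
    (∑ j, A j ^ p) ^ (1 / p) ≤ (∑ j, u j ^ p) ^ (1 / p - 1) * ∑ j, u j ^ (p - 1) * A j := by
  rcases eq_or_lt_of_le hp1 with h1 | h1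
  · subst h1
    simp
  have hT : 0 ≤ ∑ j, u j ^ (p - 1) * A j :=
    Finset.sum_nonneg fun j _ => mul_nonneg (Real.rpow_nonneg (hu j).le _) (hA j)
  have hconj : Real.HolderConjugate (1 / p) (1 / (1 - p)) := by
    rw [Real.holderConjugate_iff]
    constructor
    · rw [lt_div_iff₀ hp0]; linarith
    · simp
  have key := Real.inner_le_Lp_mul_Lq_of_nonneg Finset.univ hconj
    (f := fun j => (u j ^ (p - 1) * A j) ^ p) (g := fun j => (u j ^ p) ^ (1 - p))
    (fun j _ => Real.rpow_nonneg (mul_nonneg (Real.rpow_nonneg (hu j).le _) (hA j)) _)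
    (fun j _ => Real.rpow_nonneg (Real.rpow_nonneg (hu j).le _) _)
  have h1p : 1 - p ≠ 0 := by linarith
  have e1 : ∀ j, (u j ^ (p - 1) * A j) ^ p * (u j ^ p) ^ (1 - p) = A j ^ p := by
    intro j
    rw [Real.mul_rpow (Real.rpow_nonneg (hu j).le _) (hA j), ← Real.rpow_mul (hu j).le,
      ← Real.rpow_mul (hu j).le, mul_right_comm, ← Real.rpow_add (hu j)]
    have : (p - 1) * p + p * (1 - p) = 0 := by ring
    rw [this]; simp
  have e2 : ∀ j, ((u j ^ (p - 1) * A j) ^ p) ^ (1 / p) = u j ^ (p - 1) * A j := by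
    intro j
    rw [← Real.rpow_mul (mul_nonneg (Real.rpow_nonneg (hu j).le _) (hA j)),
      mul_one_div_cancel hp0.ne', Real.rpow_one]
  have e3 : ∀ j, ((u j ^ p) ^ (1 - p)) ^ (1 / (1 - p)) = u j ^ p := by
    intro j
    rw [← Real.rpow_mul (Real.rpow_nonneg (hu j).le _), mul_one_div_cancel h1p, Real.rpow_one]
  simp only [e1, e2, e3, one_div_one_div] at key
  calc (∑ j, A j ^ p) ^ (1 / p)
      ≤ ((∑ j, u j ^ (p - 1) * A j) ^ p * (∑ j, u j ^ p) ^ (1 - p)) ^ (1 / p) := by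
        apply Real.rpow_le_rpow _ key (by positivity)
        exact Finset.sum_nonneg fun j _ => Real.rpow_nonneg (hA j) _
    _ = _ := by
        rw [Real.mul_rpow (Real.rpow_nonneg hT _) (Real.rpow_nonneg hS.le _),
          ← Real.rpow_mul hT, ← Real.rpow_mul hS.le, mul_one_div_cancel hp0.ne', Real.rpow_one,
          mul_comm]
        congr 2
        field_simp

theorem aux_convex {c : ℕ} (hc : 1 ≤ c) (p : ℝ) (hp0 : 1 / 2 < p) (hp1 : p ≤ 1)
    (A B C : Fin c → ℝ) (hA : ∀ j, 0 ≤ A j) (hB : ∀ j, B j ^ 2 ≤ A j * C j)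
    (hu : ∀ j, ∀ t : ℝ, 0 < A j * t ^ 2 + 2 * B j * t + C j) :
    ConvexOn ℝ Set.univ (fun t : ℝ =>
      (∑ j, (A j * t ^ 2 + 2 * B j * t + C j) ^ p) ^ (1 / p)
        - (2 * p - 1) * (∑ j, A j ^ p) ^ (1 / p) * t ^ 2) := by
  have hp : 0 < p := by linarith
  have : Nonempty (Fin c) := ⟨⟨0, hc⟩⟩
  have hS : ∀ t : ℝ, 0 < ∑ j, (A j * t ^ 2 + 2 * B j * t + C j) ^ p := fun t =>
    Finset.sum_pos (fun j _ => Real.rpow_pos_of_pos (hu j t) _) Finset.univ_nonempty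
  set K := (2 * p - 1) * (∑ j, A j ^ p) ^ (1 / p) with hK
  have du : ∀ j, ∀ t : ℝ, HasDerivAt (fun t : ℝ => A j * t ^ 2 + 2 * B j * t + C j)
      (2 * (A j * t + B j)) t := by
    intro j t
    have := ((((hasDerivAt_id t).pow 2).const_mul (A j)).add
      ((hasDerivAt_id t).const_mul (2 * B j))).add_const (C j)
    refine HasDerivAt.congr_deriv (f := fun t : ℝ => A j * t ^ 2 + 2 * B j * t + C j) this ?_
    simp only [id]; push_cast; ring
  have dS : ∀ t : ℝ, HasDerivAt (fun t : ℝ => ∑ j, (A j * t ^ 2 + 2 * B j * t + C j) ^ p)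
      (∑ j, 2 * (A j * t + B j) * p * (A j * t ^ 2 + 2 * B j * t + C j) ^ (p - 1)) t := by
    intro t
    exact HasDerivAt.fun_sum fun j _ => (du j t).rpow_const (Or.inl (hu j t).ne')
  have dR : ∀ t : ℝ, HasDerivAt
      (fun t : ℝ => ∑ j, 2 * (A j * t + B j) * p * (A j * t ^ 2 + 2 * B j * t + C j) ^ (p - 1))
      (∑ j, (2 * A j * p * (A j * t ^ 2 + 2 * B j * t + C j) ^ (p - 1)
        + 2 * (A j * t + B j) * p * (2 * (A j * t + B j) * (p - 1) *
          (A j * t ^ 2 + 2 * B j * t + C j) ^ (p - 1 - 1)))) t := by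
    intro t
    refine HasDerivAt.fun_sum fun j _ => ?_
    refine HasDerivAt.mul ?_ ((du j t).rpow_const (Or.inl (hu j t).ne'))
    have := ((((hasDerivAt_id t).const_mul (A j)).add_const (B j)).const_mul 2).mul_const p
    refine HasDerivAt.congr_deriv (f := fun t : ℝ => 2 * (A j * t + B j) * p) this ?_
    ring
  have dg : ∀ t : ℝ, HasDerivAt (fun t : ℝ =>
      (∑ j, (A j * t ^ 2 + 2 * B j * t + C j) ^ p) ^ (1 / p) - K * t ^ 2)
      ((∑ j, 2 * (A j * t + B j) * p * (A j * t ^ 2 + 2 * B j * t + C j) ^ (p - 1)) * (1 / p)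
        * (∑ j, (A j * t ^ 2 + 2 * B j * t + C j) ^ p) ^ (1 / p - 1) - K * (2 * t)) t := by
    intro t
    refine ((dS t).rpow_const (Or.inl (hS t).ne')).sub ?_
    have := ((hasDerivAt_id t).pow 2).const_mul K
    refine HasDerivAt.congr_deriv (f := fun t : ℝ => K * t ^ 2) this ?_
    simp only [id]; push_cast; ring
  have dg2 : ∀ t : ℝ, HasDerivAt (fun t : ℝ =>
      (∑ j, 2 * (A j * t + B j) * p * (A j * t ^ 2 + 2 * B j * t + C j) ^ (p - 1)) * (1 / p)
        * (∑ j, (A j * t ^ 2 + 2 * B j * t + C j) ^ p) ^ (1 / p - 1) - K * (2 * t))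
      (((∑ j, (2 * A j * p * (A j * t ^ 2 + 2 * B j * t + C j) ^ (p - 1)
        + 2 * (A j * t + B j) * p * (2 * (A j * t + B j) * (p - 1) *
          (A j * t ^ 2 + 2 * B j * t + C j) ^ (p - 1 - 1)))) * (1 / p))
        * (∑ j, (A j * t ^ 2 + 2 * B j * t + C j) ^ p) ^ (1 / p - 1)
       + (∑ j, 2 * (A j * t + B j) * p * (A j * t ^ 2 + 2 * B j * t + C j) ^ (p - 1)) * (1 / p)
        * ((∑ j, 2 * (A j * t + B j) * p * (A j * t ^ 2 + 2 * B j * t + C j) ^ (p - 1))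
          * (1 / p - 1) * (∑ j, (A j * t ^ 2 + 2 * B j * t + C j) ^ p) ^ (1 / p - 1 - 1))
        - K * 2) t := by
    intro t
    refine HasDerivAt.sub (HasDerivAt.mul ((dR t).mul_const (1 / p))
      ((dS t).rpow_const (Or.inl (hS t).ne'))) ?_
    have := ((hasDerivAt_id t).const_mul 2).const_mul K
    refine HasDerivAt.congr_deriv (f := fun t : ℝ => K * (2 * t)) this ?_
    ring
  refine convexOn_of_hasDerivWithinAt2_nonneg convex_univ
    (fun t _ => (dg t).continuousAt.continuousWithinAt)
    (fun t _ => (dg t).hasDerivWithinAt) (fun t _ => (dg2 t).hasDerivWithinAt) ?_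
  intro t _
  have hH := aux_holder p hp hp1 A (fun j => A j * t ^ 2 + 2 * B j * t + C j) hA
    (fun j => hu j t) (hS t)
  set R := ∑ j, 2 * (A j * t + B j) * p * (A j * t ^ 2 + 2 * B j * t + C j) ^ (p - 1)
  set S := ∑ j, (A j * t ^ 2 + 2 * B j * t + C j) ^ p with hSd
  have hSt : 0 < S := hS t
  have t2 : 0 ≤ R * (1 / p) * (R * (1 / p - 1) * S ^ (1 / p - 1 - 1)) := by
    have h1 : 0 ≤ 1 / p - 1 := by
      rw [sub_nonneg, le_div_iff₀ hp]; linarith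
    have : R * (1 / p) * (R * (1 / p - 1) * S ^ (1 / p - 1 - 1))
      = R ^ 2 * ((1 / p) * (1 / p - 1) * S ^ (1 / p - 1 - 1)) := by ring
    rw [this]
    have := Real.rpow_nonneg hSt.le (1 / p - 1 - 1)
    positivity
  have t1 : 2 * (2 * p - 1) * ∑ j, (A j * t ^ 2 + 2 * B j * t + C j) ^ (p - 1) * A j ≤
      (∑ j, (2 * A j * p * (A j * t ^ 2 + 2 * B j * t + C j) ^ (p - 1)
        + 2 * (A j * t + B j) * p * (2 * (A j * t + B j) * (p - 1) *
          (A j * t ^ 2 + 2 * B j * t + C j) ^ (p - 1 - 1)))) * (1 / p) := by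
    rw [Finset.mul_sum, Finset.sum_mul]
    refine Finset.sum_le_sum fun j _ => ?_
    have hw := hu j t
    have hsq : (A j * t + B j) ^ 2 ≤ A j * (A j * t ^ 2 + 2 * B j * t + C j) := by
      nlinarith [hB j]
    set w := A j * t ^ 2 + 2 * B j * t + C j
    have hww : w ^ (p - 1) = w ^ (p - 1 - 1) * w := by
      rw [Real.rpow_sub_one hw.ne' (p - 1)]; field_simp
    have hP := Real.rpow_nonneg hw.le (p - 1 - 1)
    rw [hww]
    set P := w ^ (p - 1 - 1)
    have : (2 * A j * p * (P * w) + 2 * (A j * t + B j) * p *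
        (2 * (A j * t + B j) * (p - 1) * P)) * (1 / p)
        = 2 * A j * (P * w) - 4 * (1 - p) * P * (A j * t + B j) ^ 2 := by
      field_simp; ring
    rw [this]
    have h4 : 0 ≤ 4 * (1 - p) * P := by
      have : 0 ≤ 1 - p := by linarith
      positivity
    nlinarith [mul_le_mul_of_nonneg_left hsq h4]
  have hSp := Real.rpow_nonneg hSt.le (1 / p - 1)
  have h5 := mul_le_mul_of_nonneg_right t1 hSp
  have h6 := mul_le_mul_of_nonneg_left hH (by linarith : 0 ≤ 2 * (2 * p - 1))
  rw [hK]
  linarith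

theorem norm2q_sq {E : Type*} [NormedAddCommGroup E] {c : ℕ}
    (q : ℝ) (hq : 0 < q) (w : Fin c → E) :
    norm2q q w ^ 2 = (∑ j, (‖w j‖ ^ 2) ^ (q / 2)) ^ (1 / (q / 2)) := by
  have h : ∀ j, (‖w j‖ ^ 2) ^ (q / 2) = ‖w j‖ ^ q := by
    intro j
    rw [← Real.rpow_natCast, ← Real.rpow_mul (norm_nonneg _)]
    congr 1; push_cast; ring
  simp only [h]
  unfold norm2q
  rw [← Real.rpow_natCast, ← Real.rpow_mul
    (Finset.sum_nonneg fun j _ => Real.rpow_nonneg (norm_nonneg _) _)]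
  congr 1; push_cast; field_simp

theorem aux_sharp {E : Type*} [NormedAddCommGroup E]
    [InnerProductSpace ℝ E] (c : ℕ) (hc : 1 ≤ c) (q : ℝ) (hq₁ : 1 < q) (hq₂ : q ≤ 2)
    (x y : Fin c → E) (a : ℝ) (ha : a ∈ Set.Ioo (0 : ℝ) 1) :
    norm2q q (a • x + (1 - a) • y) ^ 2 ≤ a * norm2q q x ^ 2 + (1 - a) * norm2q q y ^ 2
      - (q - 1) * a * (1 - a) * norm2q q (x - y) ^ 2 := by
  obtain ⟨ha0, ha1⟩ := ha
  have hq0 : 0 < q := by linarith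
  have hp : 0 < q / 2 := by linarith
  have step : ∀ ε : ℝ, 0 < ε →
      (∑ j, (‖(a • x + (1 - a) • y) j‖ ^ 2 + ε) ^ (q / 2)) ^ (1 / (q / 2)) ≤
      a * (∑ j, (‖x j‖ ^ 2 + ε) ^ (q / 2)) ^ (1 / (q / 2))
      + (1 - a) * (∑ j, (‖y j‖ ^ 2 + ε) ^ (q / 2)) ^ (1 / (q / 2))
      - (q - 1) * a * (1 - a) * norm2q q (x - y) ^ 2 := by
    intro ε hε
    have hexp : ∀ j, ∀ t : ℝ, ‖(x - y) j‖ ^ 2 * t ^ 2 + 2 * inner ℝ (y j) ((x - y) j) * t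
        + (‖y j‖ ^ 2 + ε) = ‖y j + t • (x - y) j‖ ^ 2 + ε := by
      intro j t
      rw [norm_add_sq_real, norm_smul, inner_smul_right, mul_pow, Real.norm_eq_abs, sq_abs]
      ring
    have hconv := aux_convex hc (q / 2) (by linarith) (by linarith)
      (fun j => ‖(x - y) j‖ ^ 2) (fun j => inner ℝ (y j) ((x - y) j)) (fun j => ‖y j‖ ^ 2 + ε)
      (fun j => by positivity)
      (fun j => by
        have h := abs_real_inner_le_norm (y j) ((x - y) j)
        have h2 := pow_le_pow_left₀ (abs_nonneg _) h 2
        rw [sq_abs] at h2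
        nlinarith [sq_nonneg ‖(x - y) j‖])
      (fun j t => by
        rw [hexp j t]; positivity)
    simp only [hexp] at hconv
    have h := hconv.2 (Set.mem_univ (1 : ℝ)) (Set.mem_univ (0 : ℝ)) ha0.le
      (by linarith : 0 ≤ 1 - a) (by ring)
    rw [← norm2q_sq q hq0] at h
    have ea : ∀ j, y j + a • (x - y) j = (a • x + (1 - a) • y) j := by
      intro j
      simp only [Pi.sub_apply, Pi.add_apply, Pi.smul_apply]
      module
    have ex : ∀ j, y j + (x - y) j = x j := by
      intro j; simp
    simp only [smul_eq_mul, mul_one, mul_zero, add_zero, one_smul, zero_smul, ea, ex] at h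
    nlinarith
  have hcont : ∀ w : Fin c → E, Filter.Tendsto
      (fun ε : ℝ => (∑ j, (‖w j‖ ^ 2 + ε) ^ (q / 2)) ^ (1 / (q / 2)))
      (nhdsWithin 0 (Set.Ioi 0)) (nhds (norm2q q w ^ 2)) := by
    intro w
    have hc' : Continuous (fun ε : ℝ => (∑ j, (‖w j‖ ^ 2 + ε) ^ (q / 2)) ^ (1 / (q / 2))) := by
      refine Continuous.rpow_const ?_ (fun _ => Or.inr (by positivity))
      refine continuous_finsetSum _ fun j _ => ?_
      exact Continuous.rpow_const (by fun_prop) (fun _ => Or.inr hp.le)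
    have := (hc'.tendsto 0).mono_left (nhdsWithin_le_nhds (s := Set.Ioi 0))
    rw [norm2q_sq q hq0]
    simpa using this
  refine le_of_tendsto_of_tendsto (hcont _)
    ((((hcont x).const_mul a).add ((hcont y).const_mul (1 - a))).sub_const _) ?_
  filter_upwards [self_mem_nhdsWithin] with ε hε
  exact step ε hε

/-- **Strong convexity of `f_q = (1/2)‖·‖_{2,q}²`** (key step in the proof of Corollary 4):
for `1 < q ≤ 2` and `q* = q/(q−1)`, the function `f_q` is `(1/q*)`-strongly convex with
respect to the norm `‖·‖_{2,q}` on `E^c`. -/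
theorem strongly_convex_half_sq_norm2q {E : Type*} [NormedAddCommGroup E]
    [InnerProductSpace ℝ E] (c : ℕ) (hc : 1 ≤ c) (q : ℝ) (hq₁ : 1 < q) (hq₂ : q ≤ 2) :
    ∀ x y : Fin c → E, ∀ a ∈ Set.Ioo (0 : ℝ) 1,
      (1 / 2) * (norm2q q (a • x + (1 - a) • y)) ^ 2 ≤
        a * ((1 / 2) * (norm2q q x) ^ 2) + (1 - a) * ((1 / 2) * (norm2q q y) ^ 2)
          - (1 / (2 * (q / (q - 1)))) * a * (1 - a) * (norm2q q (x - y)) ^ 2 := by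
  intro x y a ha
  have h := aux_sharp c hc q hq₁ hq₂ x y a ha
  obtain ⟨ha0, ha1⟩ := ha
  have hk : 1 / (2 * (q / (q - 1))) ≤ (q - 1) / 2 := by
    have h1 : 0 < q - 1 := by linarith
    have e : 1 / (2 * (q / (q - 1))) = ((q - 1) / 2) / q := by field_simp
    rw [e]
    exact div_le_self (by linarith) hq₁.le
  have hX : 0 ≤ a * (1 - a) * norm2q q (x - y) ^ 2 :=
    mul_nonneg (mul_nonneg ha0.le (by linarith)) (sq_nonneg _)
  have := mul_le_mul_of_nonneg_right hk hX
  linarith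
end

section
/- Let c ≥ 2, n ≥ 1, let X be a measurable space, E a real Hilbert space, φ : X → E a measurable feature map with kernel k(x,x) = ‖φ(x)‖², let 1 < q ≤ 2 with q* = q/(q−1), and let Λ > 0. Let H_{q,Λ} = {h^w : x ↦ (⟨w_1,φ(x)⟩,…,⟨w_c,φ(x)⟩) : w ∈ E^c, ‖w‖_{2,q} ≤ Λ}. Let ℓ be an L-regular loss with B_ℓ := sup_{(x,y),h∈H_{q,Λ}} ℓ(ρ_h(x,y)) finite, and assume the relevant suprema are measurable (e.g., taken over a countable dense family) and integrable. Let τ_{q*} = (E|g|^{q*})^{1/q*} be the q*-th moment of a standard Gaussian g. Then for every δ ∈ (0,1), with P^⊗n-probability at least 1 − δ over the sample ((x_1,y_1),…,(x_n,y_n)), every w with ‖w‖_{2,q} ≤ Λ satisfies R(h^w) ≤ (1/n) Σ_{i=1}^n ℓ(ρ_{h^w}(x_i,y_i)) + (4LΛ c^{1/q*} τ_{q*}/n) √((π q*/2) Σ_{i=1}^n k(x_i,x_i)) + 3 B_ℓ √(log(2/δ)/(2n)). -/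
open MeasureTheory ProbabilityTheory Real RealInnerProductSpace

/-- The multi-class margin `ρ_h(x, y) = h_y(x) - max_{y' ≠ y} h_{y'}(x)`. -/
noncomputable def mcMargin {X : Type*} {c : ℕ} (h : X → Fin c → ℝ) (x : X) (y : Fin c) : ℝ :=
  h x y - ⨆ y' : {y' : Fin c // y' ≠ y}, h x y'.1

lemma aux_le_sup {ι : Type*} [Finite ι] (f : ι → ℝ) (w : ι) : f w ≤ ⨆ w, f w :=
  le_ciSup (Set.finite_range f).bddAbove w

lemma aux_abs_sup {ι : Type*} [Fintype ι] [Nonempty ι] (f : ι → ℝ) : |⨆ w, f w| ≤ ∑ w, |f w| := by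
  rw [abs_le]
  constructor
  · obtain ⟨w⟩ := ‹Nonempty ι›
    have h1 := aux_le_sup f w
    have h2 : |f w| ≤ ∑ w, |f w| :=
      Finset.single_le_sum (f := fun w => |f w|) (fun _ _ => abs_nonneg _) (Finset.mem_univ w)
    have := neg_abs_le (f w)
    linarith
  · refine ciSup_le fun w => ?_
    exact (le_abs_self _).trans (Finset.single_le_sum (f := fun w => |f w|)
      (fun _ _ => abs_nonneg _) (Finset.mem_univ w))

lemma aux_int_sup {ι Ω : Type*} [Fintype ι] [Nonempty ι] [MeasurableSpace Ω] {μ : Measure Ω}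
    {f : Ω → ι → ℝ} (hf : ∀ w, Integrable (fun ω => f ω w) μ) :
    Integrable (fun ω => ⨆ w, f ω w) μ := by
  have hg : Integrable (fun ω => ∑ w, |f ω w|) μ :=
    integrable_finsetSum _ fun w _ => (hf w).abs
  refine hg.mono' ?_ ?_
  · exact (AEMeasurable.iSup fun w => (hf w).aemeasurable).aestronglyMeasurable
  · exact Filter.Eventually.of_forall fun ω => aux_abs_sup _

lemma aux_pi_succ {Ω : Type*} [MeasurableSpace Ω] (μ : Measure Ω) [IsProbabilityMeasure μ] {n : ℕ}
    {F : (Fin (n + 1) → Ω) → ℝ} (hF : Integrable F (Measure.pi fun _ => μ)) :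
    ∫ s, F s ∂(Measure.pi fun _ => μ)
      = ∫ x, ∫ s, F (Fin.cons x s) ∂(Measure.pi fun _ : Fin n => μ) ∂μ ∧
    ∫ s, F s ∂(Measure.pi fun _ => μ)
      = ∫ s, ∫ x, F (Fin.cons x s) ∂μ ∂(Measure.pi fun _ : Fin n => μ) ∧
    Integrable (fun z : Ω × (Fin n → Ω) => F (Fin.cons z.1 z.2))
      (μ.prod (Measure.pi fun _ : Fin n => μ)) := by
  have hmp := (measurePreserving_piFinSuccAbove (fun _ : Fin (n + 1) => μ) 0).symm
  have he : ∀ z : Ω × (Fin n → Ω),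
      (MeasurableEquiv.piFinSuccAbove (fun _ : Fin (n + 1) => Ω) 0).symm z = Fin.cons z.1 z.2 := by
    intro z
    simp [MeasurableEquiv.piFinSuccAbove, Fin.insertNthEquiv]
  have hi : Integrable (fun z : Ω × (Fin n → Ω) => F (Fin.cons z.1 z.2))
      (μ.prod (Measure.pi fun _ : Fin n => μ)) := by
    have := (hmp.integrable_comp_emb (MeasurableEquiv.measurableEmbedding _)).2 hF
    exact this.congr (Filter.Eventually.of_forall fun z => congrArg F (he z))
  have h := hmp.integral_comp' F
  have h' : ∫ s, F s ∂(Measure.pi fun _ => μ) =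
      ∫ z : Ω × (Fin n → Ω), F (Fin.cons z.1 z.2) ∂(μ.prod (Measure.pi fun _ : Fin n => μ)) :=
    h.symm.trans (integral_congr_ae (Filter.Eventually.of_forall fun z => congrArg F (he z)))
  refine ⟨?_, ?_, hi⟩
  · rw [h', integral_prod _ hi]
  · rw [h', integral_prod_symm _ hi]

lemma aux_tensor {ι Ω₁ Ω₂ : Type*} [Fintype ι] [Nonempty ι] [MeasurableSpace Ω₁] [MeasurableSpace Ω₂]
    (μ₁ : Measure Ω₁) (μ₂ : Measure Ω₂) [IsProbabilityMeasure μ₁] [IsProbabilityMeasure μ₂]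
    (n : ℕ) : ∀ (U : Fin n → Ω₁ → ι → ℝ) (V : Fin n → Ω₂ → ι → ℝ)
    (_ : ∀ i w, Integrable (fun ω => U i ω w) μ₁) (_ : ∀ i w, Integrable (fun ω => V i ω w) μ₂)
    (_ : ∀ i (A : ι → ℝ), ∫ ω, ⨆ w, (A w + U i ω w) ∂μ₁ ≤ ∫ ω, ⨆ w, (A w + V i ω w) ∂μ₂)
    (A : ι → ℝ),
    ∫ s, ⨆ w, (A w + ∑ i, U i (s i) w) ∂(Measure.pi fun _ => μ₁) ≤
      ∫ s, ⨆ w, (A w + ∑ i, V i (s i) w) ∂(Measure.pi fun _ => μ₂) := by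
  induction n with
  | zero => intro U V _ _ _ A; simp
  | succ n ih =>
    intro U V hU hV hs A
    have iU : ∀ w i, Integrable (fun s : Fin (n + 1) → Ω₁ => U i (s i) w)
        (Measure.pi fun _ => μ₁) := fun w i => integrable_comp_eval (μ := fun _ => μ₁) (i := i) (f := fun ω => U i ω w) (hU i w)
    have iV : ∀ w i, Integrable (fun s : Fin (n + 1) → Ω₂ => V i (s i) w)
        (Measure.pi fun _ => μ₂) := fun w i => integrable_comp_eval (μ := fun _ => μ₂) (i := i) (f := fun ω => V i ω w) (hV i w)
    have iU' : ∀ w (i : Fin n), Integrable (fun s : Fin n → Ω₁ => U i.succ (s i) w)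
        (Measure.pi fun _ => μ₁) := fun w i => integrable_comp_eval (μ := fun _ => μ₁) (i := i) (f := fun ω => U i.succ ω w) (hU i.succ w)
    have iV' : ∀ w (i : Fin n), Integrable (fun s : Fin n → Ω₂ => V i.succ (s i) w)
        (Measure.pi fun _ => μ₂) := fun w i => integrable_comp_eval (μ := fun _ => μ₂) (i := i) (f := fun ω => V i.succ ω w) (hV i.succ w)
    have IU := aux_pi_succ μ₁ (F := fun s => ⨆ w, (A w + ∑ i, U i (s i) w)) (aux_int_sup fun w =>
      (integrable_const _).add (integrable_finsetSum _ fun i _ => iU w i))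
    have IV := aux_pi_succ μ₂ (F := fun s => ⨆ w, (A w + ∑ i, V i (s i) w)) (aux_int_sup fun w =>
      (integrable_const _).add (integrable_finsetSum _ fun i _ => iV w i))
    rw [IU.1, IV.2.1]
    have IU3 := IU.2.2
    have IV3 := IV.2.2
    simp only [Fin.sum_univ_succ, Fin.cons_zero, Fin.cons_succ] at IU3 IV3 ⊢
    have hmix : Integrable (fun z : Ω₁ × (Fin n → Ω₂) =>
        ⨆ w, (A w + (U 0 z.1 w + ∑ i : Fin n, V i.succ (z.2 i) w)))
        (μ₁.prod (Measure.pi fun _ => μ₂)) := by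
      refine aux_int_sup fun w => (integrable_const _).add (Integrable.add ?_ ?_)
      · exact (hU 0 w).comp_fst _
      · exact (integrable_finsetSum _ fun i _ => iV' w i).comp_snd _
    calc ∫ x, ∫ s, ⨆ w, (A w + (U 0 x w + ∑ i : Fin n, U i.succ (s i) w))
            ∂(Measure.pi fun _ => μ₁) ∂μ₁
        ≤ ∫ x, ∫ s, ⨆ w, (A w + (U 0 x w + ∑ i : Fin n, V i.succ (s i) w))
            ∂(Measure.pi fun _ => μ₂) ∂μ₁ := by
          refine integral_mono IU3.integral_prod_left hmix.integral_prod_left fun x => ?_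
          simp only [← add_assoc]
          exact ih _ _ (fun i w => hU i.succ w) (fun i w => hV i.succ w) (fun i A => hs i.succ A)
            (fun w => A w + U 0 x w)
      _ = ∫ s, ∫ x, ⨆ w, (A w + (U 0 x w + ∑ i : Fin n, V i.succ (s i) w)) ∂μ₁
            ∂(Measure.pi fun _ => μ₂) := by
          rw [← integral_prod (μ := μ₁) (ν := Measure.pi fun _ : Fin n => μ₂) _ hmix,
            integral_prod_symm _ hmix]
      _ ≤ ∫ s, ∫ x, ⨆ w, (A w + (V 0 x w + ∑ i : Fin n, V i.succ (s i) w)) ∂μ₂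
            ∂(Measure.pi fun _ => μ₂) := by
          refine integral_mono hmix.integral_prod_right IV3.integral_prod_right fun s => ?_
          have := hs 0 (fun w => A w + ∑ i : Fin n, V i.succ (s i) w)
          simp only [add_assoc, add_comm (∑ i : Fin n, V i.succ (s i) _)] at this
          exact this

lemma aux_hoeff {Ω : Type*} [MeasurableSpace Ω] (μ : Measure Ω) [IsProbabilityMeasure μ]
    (F : Ω → ℝ) (hF : Measurable F) (c : ℝ) (hd : ∀ x y, F x - F y ≤ c) (t : ℝ) :
    ∫ x, exp (t * F x) ∂μ ≤ exp (t * ∫ x, F x ∂μ + c ^ 2 * t ^ 2 / 8) := by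
  have : Nonempty Ω := nonempty_of_isProbabilityMeasure μ
  obtain ⟨x0⟩ := this
  have hbdd : BddBelow (Set.range F) := ⟨F x0 - c, by
    rintro _ ⟨y, rfl⟩
    have := hd x0 y
    linarith⟩
  have : Nonempty Ω := ⟨x0⟩
  set a := ⨅ x, F x with ha
  have hmem : ∀ x, F x ∈ Set.Icc a (a + c) := by
    intro x
    refine ⟨ciInf_le hbdd x, ?_⟩
    have : F x - c ≤ a := le_ciInf fun y => by have := hd x y; linarith
    linarith
  have h := hasSubgaussianMGF_of_mem_Icc (μ := μ) hF.aemeasurable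
    (Filter.Eventually.of_forall hmem)
  have h2 := h.mgf_le t
  have hc : 0 ≤ c := by simpa using hd x0 x0
  rw [mgf] at h2
  have e1 : ∀ x, exp (t * (F x - ∫ x, F x ∂μ)) = exp (t * F x) * exp (-(t * ∫ x, F x ∂μ)) := by
    intro x; rw [← exp_add]; ring_nf
  simp only [e1] at h2
  rw [integral_mul_const, exp_neg, ← div_eq_mul_inv, div_le_iff₀ (exp_pos _), ← exp_add] at h2
  refine h2.trans (le_of_eq ?_)
  congr 1
  simp
  rw [abs_of_nonneg hc]
  ring

lemma aux_mcd {Ω : Type*} [MeasurableSpace Ω] (μ : Measure Ω) [IsProbabilityMeasure μ]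
    (c K : ℝ) (t : ℝ) (n : ℕ) : ∀ (f : (Fin n → Ω) → ℝ) (_ : Measurable f) (_ : ∀ s, |f s| ≤ K)
    (_ : ∀ s s' i, (∀ j, j ≠ i → s j = s' j) → f s - f s' ≤ c),
    ∫ s, exp (t * f s) ∂(Measure.pi fun _ => μ) ≤
      exp (t * ∫ s, f s ∂(Measure.pi fun _ => μ) + n * c ^ 2 * t ^ 2 / 8) := by
  induction n with
  | zero =>
    intro f hf hK hd
    have : ∀ s : Fin 0 → Ω, f s = f Fin.elim0 := fun s => congrArg f (Subsingleton.elim _ _)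
    simp [this]
  | succ n ih =>
    intro f hf hK hd
    have hmc : Measurable (fun z : Ω × (Fin n → Ω) => (Fin.cons z.1 z.2 : Fin (n + 1) → Ω)) := by
      rw [measurable_pi_iff]
      intro i
      refine Fin.cases ?_ (fun i => ?_) i
      · simpa using measurable_fst
      · simp only [Fin.cons_succ]
        exact (measurable_pi_apply i).comp measurable_snd
    have hmc2 : ∀ x, Measurable (fun s : Fin n → Ω => (Fin.cons x s : Fin (n + 1) → Ω)) :=
      fun x => hmc.comp (measurable_const.prodMk measurable_id)
    have hfc : ∀ x, Integrable (fun s : Fin n → Ω => f (Fin.cons x s)) (Measure.pi fun _ => μ) :=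
      fun x => Integrable.of_bound (hf.comp (hmc2 x)).aestronglyMeasurable K
        (Filter.Eventually.of_forall fun s => hK _)
    have hfi : Integrable f (Measure.pi fun _ => μ) :=
      Integrable.of_bound hf.aestronglyMeasurable K (Filter.Eventually.of_forall hK)
    have hef : ∀ s, ‖exp (t * f s)‖ ≤ exp (|t| * K) := by
      intro s
      rw [Real.norm_eq_abs, abs_of_pos (exp_pos _), exp_le_exp]
      calc t * f s ≤ |t * f s| := le_abs_self _
        _ = |t| * |f s| := abs_mul _ _
        _ ≤ _ := by gcongr; exact hK s
    have hei : Integrable (fun s => exp (t * f s)) (Measure.pi fun _ : Fin (n + 1) => μ) :=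
      Integrable.of_bound (by fun_prop) _ (Filter.Eventually.of_forall hef)
    obtain ⟨h1, -, h3⟩ := aux_pi_succ μ hei
    obtain ⟨h4, -, h6⟩ := aux_pi_succ μ hfi
    set F : Ω → ℝ := fun x => ∫ s, f (Fin.cons x s) ∂(Measure.pi fun _ : Fin n => μ) with hFdef
    have hFm : Measurable F := by
      have : StronglyMeasurable (fun z : Ω × (Fin n → Ω) => f (Fin.cons z.1 z.2)) :=
        (hf.comp hmc).stronglyMeasurable
      exact this.integral_prod_right.measurable
    have hFd : ∀ x y, F x - F y ≤ c := by
      intro x y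
      rw [hFdef]
      simp only
      rw [← integral_sub (hfc x) (hfc y)]
      refine (integral_mono ((hfc x).sub (hfc y)) (integrable_const c) fun s => ?_).trans (by simp)
      refine hd _ _ 0 fun j hj => ?_
      obtain ⟨k, rfl⟩ := Fin.exists_succ_eq.2 hj
      simp
    have hFb : ∀ x, |F x| ≤ K := by
      intro x
      have := norm_integral_le_of_norm_le_const (μ := Measure.pi fun _ : Fin n => μ)
        (f := fun s => f (Fin.cons x s)) (C := K) (Filter.Eventually.of_forall fun s => hK _)
      simpa using this
    rw [h1, h4]
    have hstep : ∀ x, ∫ s, exp (t * f (Fin.cons x s)) ∂(Measure.pi fun _ : Fin n => μ) ≤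
        exp (t * F x) * exp (n * c ^ 2 * t ^ 2 / 8) := by
      intro x
      rw [← exp_add]
      refine ih (fun s => f (Fin.cons x s)) (hf.comp (hmc2 x)) (fun s => hK _) ?_
      intro s s' i hss
      refine hd _ _ i.succ fun j hj => ?_
      refine Fin.cases (fun _ => by simp) (fun k hk => ?_) j hj
      simpa using hss k (fun h => hk (by rw [h]))
    have hEF : Integrable (fun x => exp (t * F x)) μ := by
      refine Integrable.of_bound (by fun_prop) (exp (|t| * K)) (Filter.Eventually.of_forall ?_)
      intro x
      rw [Real.norm_eq_abs, abs_of_pos (exp_pos _), exp_le_exp]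
      calc t * F x ≤ |t * F x| := le_abs_self _
        _ = |t| * |F x| := abs_mul _ _
        _ ≤ _ := by gcongr; exact hFb x
    calc _ ≤ ∫ x, exp (t * F x) * exp (n * c ^ 2 * t ^ 2 / 8) ∂μ :=
          integral_mono h3.integral_prod_left (hEF.mul_const _) hstep
      _ = (∫ x, exp (t * F x) ∂μ) * exp (n * c ^ 2 * t ^ 2 / 8) := integral_mul_const _ _
      _ ≤ exp (t * ∫ x, F x ∂μ + c ^ 2 * t ^ 2 / 8) * exp (n * c ^ 2 * t ^ 2 / 8) := by
          gcongr
          exact aux_hoeff μ F hFm c hFd t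
      _ = _ := by
          rw [← exp_add]
          congr 1
          push_cast
          ring

/-- bounded differences inequality -/
lemma aux_mcd_tail {Ω : Type*} [MeasurableSpace Ω] (μ : Measure Ω) [IsProbabilityMeasure μ]
    (c K : ℝ) (hc : 0 < c) (n : ℕ) (hn : 1 ≤ n) (f : (Fin n → Ω) → ℝ) (hf : Measurable f)
    (hK : ∀ s, |f s| ≤ K)
    (hd : ∀ s s' i, (∀ j, j ≠ i → s j = s' j) → f s - f s' ≤ c)
    (hm : ∫ s, f s ∂(Measure.pi fun _ => μ) ≤ 0) (r : ℝ) (hr : 0 ≤ r) :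
    (Measure.pi fun _ => μ).real {s | r ≤ f s} ≤ exp (- (2 * r ^ 2 / (n * c ^ 2))) := by
  have hn0 : (0 : ℝ) < n := by exact_mod_cast hn
  set t : ℝ := 4 * r / (n * c ^ 2) with ht
  have ht0 : 0 ≤ t := by positivity
  have hint : Integrable (fun s => exp (t * f s)) (Measure.pi fun _ : Fin n => μ) := by
    refine Integrable.of_bound (by fun_prop) (exp (|t| * K)) (Filter.Eventually.of_forall ?_)
    intro s
    rw [Real.norm_eq_abs, abs_of_pos (exp_pos _), exp_le_exp]
    calc t * f s ≤ |t * f s| := le_abs_self _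
      _ = |t| * |f s| := abs_mul _ _
      _ ≤ _ := by gcongr; exact hK s
  have h := measure_ge_le_exp_mul_mgf r ht0 hint
  refine h.trans ?_
  have h2 := aux_mcd μ c K t n f hf hK hd
  calc _ ≤ exp (-t * r) * exp (t * ∫ s, f s ∂(Measure.pi fun _ => μ) + n * c ^ 2 * t ^ 2 / 8) := by
        gcongr
        exact h2
    _ ≤ _ := by
        rw [← exp_add, exp_le_exp]
        have h3 : t * ∫ s, f s ∂(Measure.pi fun _ => μ) ≤ 0 := mul_nonpos_of_nonneg_of_nonpos ht0 hm
        have h4 : -t * r + n * c ^ 2 * t ^ 2 / 8 = - (2 * r ^ 2 / (n * c ^ 2)) := by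
          rw [ht]; field_simp; ring
        linarith

lemma aux_gauss_law {ι : Type*} [Fintype ι] (a : ι → ℝ) :
    (Measure.pi fun _ : ι => gaussianReal 0 1).map (fun g => ∑ i, a i * g i) =
      (gaussianReal 0 1).map (fun x => √(∑ i, a i ^ 2) * x) := by
  have hind : iIndepFun (fun (i : ι) (g : ι → ℝ) => a i * g i)
      (Measure.pi fun _ : ι => gaussianReal 0 1) :=
    iIndepFun_pi (μ := fun _ : ι => gaussianReal 0 1) (X := fun i (x : ℝ) => a i * x)
      (fun i => by fun_prop)
  have hev : ∀ i : ι, HasLaw (fun g : ι → ℝ => g i) (gaussianReal 0 1)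
      (Measure.pi fun _ : ι => gaussianReal 0 1) := fun i =>
    ⟨(measurable_pi_apply i).aemeasurable, (measurePreserving_eval _ i).map_eq⟩
  have hlaw := fun i => gaussianReal_const_mul (hev i) (a i)
  have hG : ∀ i, HasGaussianLaw (fun g : ι → ℝ => a i * g i)
      (Measure.pi fun _ : ι => gaussianReal 0 1) := fun i => (hlaw i).hasGaussianLaw
  have hsum := hind.hasGaussianLaw_fun_sum hG
  rw [hsum.map_eq_gaussianReal, gaussianReal_map_const_mul]
  have hmean : ∫ g : ι → ℝ, ∑ i, a i * g i ∂(Measure.pi fun _ : ι => gaussianReal 0 1) = 0 := by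
    rw [integral_finsetSum _ fun i _ => (hG i).integrable]
    refine Finset.sum_eq_zero fun i _ => ?_
    rw [(hlaw i).integral_eq]
    simp
  have hvar : Var[fun g : ι → ℝ => ∑ i, a i * g i; Measure.pi fun _ : ι => gaussianReal 0 1] =
      ∑ i, a i ^ 2 := by
    have := IndepFun.variance_sum (X := fun (i : ι) (g : ι → ℝ) => a i * g i)
      (μ := Measure.pi fun _ : ι => gaussianReal 0 1) (s := Finset.univ)
      (fun i _ => (hG i).memLp_two) (fun i _ j _ hij => hind.indepFun hij)
    have e : (∑ i, fun g : ι → ℝ => a i * g i) = fun g : ι → ℝ => ∑ i, a i * g i := by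
      ext g; simp
    rw [e] at this
    rw [this]
    refine Finset.sum_congr rfl fun i _ => ?_
    rw [(hlaw i).variance_eq]
    simp
  rw [hmean, hvar]
  congr 1
  · simp
  · ext
    simp [Real.sq_sqrt (Finset.sum_nonneg fun i _ => sq_nonneg (a i)),
      Finset.sum_nonneg fun i _ => sq_nonneg (a i)]

lemma aux_gauss_lp (p : ℝ) (hp : 0 < p) :
    Integrable (fun x : ℝ => |x| ^ p) (gaussianReal 0 1) := by
  have h := (memLp_id_gaussianReal (μ := 0) (v := 1) (p.toNNReal)).integrable_norm_rpow'
  simpa [Real.coe_toNNReal _ hp.le] using h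

lemma aux_gauss_int {ι : Type*} [Fintype ι] (a : ι → ℝ) (p : ℝ) (hp : 0 < p) :
    Integrable (fun g : ι → ℝ => |∑ i, a i * g i| ^ p) (Measure.pi fun _ : ι => gaussianReal 0 1) ∧
    ∫ g : ι → ℝ, |∑ i, a i * g i| ^ p ∂(Measure.pi fun _ : ι => gaussianReal 0 1) =
      √(∑ i, a i ^ 2) ^ p * ∫ x : ℝ, |x| ^ p ∂(gaussianReal 0 1) := by
  have hm : Measurable (fun g : ι → ℝ => ∑ i, a i * g i) := by fun_prop
  have hm2 : Measurable (fun x : ℝ => √(∑ i, a i ^ 2) * x) := by fun_prop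
  have hm3 : Measurable (fun x : ℝ => |x| ^ p) := by fun_prop
  have e : ∀ x : ℝ, |√(∑ i, a i ^ 2) * x| ^ p = √(∑ i, a i ^ 2) ^ p * |x| ^ p := by
    intro x
    rw [abs_mul, abs_of_nonneg (Real.sqrt_nonneg _),
      Real.mul_rpow (Real.sqrt_nonneg _) (abs_nonneg _)]
  constructor
  · have : Integrable (fun x : ℝ => |x| ^ p)
        ((Measure.pi fun _ : ι => gaussianReal 0 1).map (fun g => ∑ i, a i * g i)) := by
      rw [aux_gauss_law, integrable_map_measure hm3.aestronglyMeasurable hm2.aemeasurable]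
      simp only [Function.comp_def, e]
      exact (aux_gauss_lp p hp).const_mul _
    exact (integrable_map_measure hm3.aestronglyMeasurable hm.aemeasurable).1 this
  · have h1 := integral_map (μ := Measure.pi fun _ : ι => gaussianReal 0 1) hm.aemeasurable
      (f := fun x : ℝ => |x| ^ p) hm3.aestronglyMeasurable
    rw [← h1, aux_gauss_law, integral_map hm2.aemeasurable hm3.aestronglyMeasurable]
    simp only [e]
    rw [integral_const_mul]

lemma aux_gauss_abs : ∫ x : ℝ, |x| ∂(gaussianReal 0 1) = √(2 / π) := by
  rw [integral_gaussianReal_eq_integral_smul (by simp)]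
  have h1 : ∀ x : ℝ, gaussianPDFReal 0 1 x • |x| =
      (fun y : ℝ => (√(2 * π))⁻¹ * (y * rexp (-(1 / 2) * y ^ 2))) |x| := by
    intro x
    simp [gaussianPDFReal]
    ring_nf
  simp only [h1]
  rw [integral_comp_abs (f := fun y : ℝ => (√(2 * π))⁻¹ * (y * rexp (-(1 / 2) * y ^ 2))),
    integral_const_mul]
  have h2 : ∫ y in Set.Ioi (0 : ℝ), y * rexp (-(1 / 2) * y ^ 2) = 1 := by
    have := integral_rpow_mul_exp_neg_mul_rpow (p := 2) (q := 1) (b := 1 / 2) (by norm_num)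
      (by norm_num) (by norm_num)
    norm_num at this
    norm_num
    exact this
  rw [h2]
  have : 0 < π := pi_pos
  rw [Real.sqrt_mul (by norm_num), Real.sqrt_div (by norm_num)]
  have h3 : √2 * √2 = 2 := Real.mul_self_sqrt (by norm_num)
  field_simp
  linarith

lemma aux_gauss_l1 {ι : Type*} [Fintype ι] (a : ι → ℝ) :
    Integrable (fun g : ι → ℝ => ∑ i, a i * g i) (Measure.pi fun _ : ι => gaussianReal 0 1) ∧
    ∫ g : ι → ℝ, |∑ i, a i * g i| ∂(Measure.pi fun _ : ι => gaussianReal 0 1) =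
      √(∑ i, a i ^ 2) * √(2 / π) := by
  have h := aux_gauss_int a 1 one_pos
  simp only [rpow_one, aux_gauss_abs] at h
  exact ⟨(integrable_norm_iff (Measurable.aestronglyMeasurable (by fun_prop))).1 h.1, h.2⟩

lemma aux_gauss_ge_one (p : ℝ) (hp : 2 ≤ p) : 1 ≤ ∫ x : ℝ, |x| ^ p ∂(gaussianReal 0 1) := by
  have hsq : ∫ x : ℝ, x ^ 2 ∂(gaussianReal 0 1) = 1 := by
    have h := variance_fun_id_gaussianReal (μ := 0) (v := 1)
    rw [variance_of_integral_eq_zero (by fun_prop) (by simp)] at h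
    simpa using h
  have hi : Integrable (fun x : ℝ => x ^ 2) (gaussianReal 0 1) := by
    have := aux_gauss_lp 2 (by norm_num)
    simpa using this
  have hi2 : Integrable (fun x : ℝ => x ^ 2 - 1) (gaussianReal 0 1) := hi.sub (integrable_const _)
  have h1 : ∫ x : ℝ, (1 + p / 2 * (x ^ 2 - 1)) ∂(gaussianReal 0 1) = 1 := by
    rw [integral_add (integrable_const _) (hi2.const_mul _),
      integral_const_mul, integral_sub hi (integrable_const _), hsq]
    simp
  rw [← h1]
  refine integral_mono ((integrable_const _).add (hi2.const_mul _))
    (aux_gauss_lp p (by linarith)) fun x => ?_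
  have := one_add_mul_self_le_rpow_one_add (s := x ^ 2 - 1) (by nlinarith [sq_nonneg x])
    (p := p / 2) (by linarith)
  refine this.trans (le_of_eq ?_)
  rw [add_sub_cancel, ← sq_abs, ← Real.rpow_natCast, ← Real.rpow_mul (abs_nonneg x)]
  congr 1
  push_cast
  ring

/-- uniform measure on signs -/
noncomputable def auxRad : Measure Bool :=
  (2⁻¹ : ENNReal) • (Measure.dirac true + Measure.dirac false)

/-- the sign attached to a boolean -/
noncomputable def auxSgn (b : Bool) : ℝ := if b then 1 else -1

instance : IsProbabilityMeasure auxRad := ⟨by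
  simp [auxRad]
  exact ENNReal.inv_two_add_inv_two⟩

lemma aux_rad_int (f : Bool → ℝ) : ∫ b, f b ∂auxRad = (f true + f false) / 2 := by
  rw [auxRad, integral_smul_measure, integral_add_measure .of_finite .of_finite]
  simp
  ring

lemma aux_gauss_neg {ι : Type*} [Fintype ι] :
    MeasurePreserving (fun g : ι → ℝ => -g) (Measure.pi fun _ : ι => gaussianReal 0 1)
      (Measure.pi fun _ : ι => gaussianReal 0 1) := by
  have := measurePreserving_pi (fun _ : ι => gaussianReal 0 1) (fun _ : ι => gaussianReal 0 1)
    (f := fun _ x => -x) (fun i => ⟨measurable_neg, by simpa using gaussianReal_map_neg (μ := 0) (v := 1)⟩)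
  exact this

lemma aux_contr_step {ι κ : Type*} [Fintype ι] [Nonempty ι] [Fintype κ] (l : ι → ℝ) (h : ι → κ → ℝ)
    (C : ℝ) (hC : 0 ≤ C) (hl : ∀ w w', |l w - l w'| ≤ C * √(∑ j, (h w j - h w' j) ^ 2))
    (A : ι → ℝ) :
    ∫ b, ⨆ w, (A w + auxSgn b * l w) ∂auxRad ≤
      ∫ g : κ → ℝ, ⨆ w, (A w + C * √(π / 2) * ∑ j, h w j * g j)
        ∂(Measure.pi fun _ : κ => gaussianReal 0 1) := by
  rw [aux_rad_int]
  set γ := Measure.pi fun _ : κ => gaussianReal 0 1 with hγ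
  set C' := C * √(π / 2) with hC'
  have hC0 : 0 ≤ C' := by positivity
  have hi : Integrable (fun g : κ → ℝ => ⨆ w, (A w + C' * ∑ j, h w j * g j)) γ :=
    aux_int_sup fun w => (integrable_const _).add ((aux_gauss_l1 (h w)).1.const_mul _)
  have hi' : Integrable (fun g : κ → ℝ => ⨆ w, (A w - C' * ∑ j, h w j * g j)) γ :=
    aux_int_sup fun w => (integrable_const _).sub ((aux_gauss_l1 (h w)).1.const_mul _)
  have hsym : ∫ g : κ → ℝ, ⨆ w, (A w - C' * ∑ j, h w j * g j) ∂γ =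
      ∫ g : κ → ℝ, ⨆ w, (A w + C' * ∑ j, h w j * g j) ∂γ := by
    have := (aux_gauss_neg (ι := κ)).integral_comp (MeasurableEquiv.neg (κ → ℝ)).measurableEmbedding
      (fun g : κ → ℝ => ⨆ w, (A w + C' * ∑ j, h w j * g j))
    rw [← this]
    simp [sub_eq_add_neg, hγ]
  obtain ⟨w, hw⟩ := exists_eq_ciSup_of_finite (f := fun w => A w + auxSgn true * l w)
  obtain ⟨w', hw'⟩ := exists_eq_ciSup_of_finite (f := fun w => A w + auxSgn false * l w)
  rw [← hw, ← hw']
  have h1 := (aux_gauss_l1 (fun j => h w j - h w' j))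
  have h2 : C * √(∑ j, (h w j - h w' j) ^ 2) =
      C' * ∫ g : κ → ℝ, |∑ j, (h w j - h w' j) * g j| ∂γ := by
    rw [hγ, h1.2, hC']
    have : √(π / 2) * √(2 / π) = 1 := by
      rw [← Real.sqrt_mul (by positivity)]
      have := pi_pos.ne'
      rw [Real.sqrt_eq_one]
      field_simp
    linear_combination (-C * √(∑ j, (h w j - h w' j) ^ 2)) * this
  have h3 : A w + A w' + C' * ∫ g : κ → ℝ, |∑ j, (h w j - h w' j) * g j| ∂γ ≤
      2 * ∫ g : κ → ℝ, ⨆ w, (A w + C' * ∑ j, h w j * g j) ∂γ := by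
    calc _ = ∫ g : κ → ℝ, (A w + A w' + C' * |∑ j, (h w j - h w' j) * g j|) ∂γ := by
          rw [integral_add (integrable_const _) (h1.1.abs.const_mul _), integral_const_mul]
          simp [hγ]
      _ ≤ ∫ g : κ → ℝ, ((⨆ w, (A w + C' * ∑ j, h w j * g j)) +
            ⨆ w, (A w - C' * ∑ j, h w j * g j)) ∂γ := by
          refine integral_mono ((integrable_const _).add (h1.1.abs.const_mul _)) (hi.add hi')
            fun g => ?_
          have a1 := aux_le_sup (fun w => A w + C' * ∑ j, h w j * g j) w
          have a2 := aux_le_sup (fun w => A w + C' * ∑ j, h w j * g j) w'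
          have a3 := aux_le_sup (fun w => A w - C' * ∑ j, h w j * g j) w
          have a4 := aux_le_sup (fun w => A w - C' * ∑ j, h w j * g j) w'
          simp only [sub_mul, Finset.sum_sub_distrib]
          rcases abs_cases (∑ j, h w j * g j - ∑ j, h w' j * g j) with ⟨e, -⟩ | ⟨e, -⟩ <;> rw [e]
          · linarith
          · linarith
      _ = _ := by rw [integral_add hi hi', hsym]; ring
  have h4 := (le_abs_self _).trans (hl w w')
  simp [auxSgn]
  linarith

lemma aux_contr {ι κ : Type*} [Fintype ι] [Nonempty ι] [Fintype κ] (n : ℕ) (l : Fin n → ι → ℝ)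
    (h : Fin n → ι → κ → ℝ) (C : ℝ) (hC : 0 ≤ C)
    (hl : ∀ i w w', |l i w - l i w'| ≤ C * √(∑ j, (h i w j - h i w' j) ^ 2)) :
    ∫ b, ⨆ w, ∑ i, auxSgn (b i) * l i w ∂(Measure.pi fun _ : Fin n => auxRad) ≤
      ∫ g : Fin n → κ → ℝ, ⨆ w, C * √(π / 2) * ∑ i, ∑ j, h i w j * g i j
        ∂(Measure.pi fun _ : Fin n => Measure.pi fun _ : κ => gaussianReal 0 1) := by
  have := aux_tensor auxRad (Measure.pi fun _ : κ => gaussianReal 0 1) n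
    (fun i b w => auxSgn b * l i w) (fun i g w => C * √(π / 2) * ∑ j, h i w j * g j)
    (fun i w => .of_finite) (fun i w => (aux_gauss_l1 (h i w)).1.const_mul _)
    (fun i A => aux_contr_step (l i) (h i) C hC (hl i) A) (fun _ => 0)
  simpa [Finset.mul_sum] using this

lemma aux_symm_step {ι Z : Type*} [Fintype ι] [Nonempty ι] [MeasurableSpace Z] (P : Measure Z)
    [IsProbabilityMeasure P] (f : Z → ι → ℝ) (hf : ∀ w, Integrable (fun z => f z w) P)
    (A : ι → ℝ) :
    ∫ z, ⨆ w, (A w + ((∫ z', f z' w ∂P) - f z w)) ∂P ≤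
      ∫ z, ⨆ w, (A w + 2 * (auxSgn z.2 * f z.1 w)) ∂(P.prod auxRad) := by
  have hs : ∀ w, Integrable (fun z : Z × Bool => auxSgn z.2 * f z.1 w) (P.prod auxRad) := by
    intro w
    have := Integrable.mul_prod (hf w) (Integrable.of_finite (f := auxSgn) (μ := auxRad))
    simpa [mul_comm] using this
  have hI : Integrable (fun z : Z × Bool => ⨆ w, (A w + 2 * (auxSgn z.2 * f z.1 w)))
      (P.prod auxRad) := aux_int_sup fun w => (integrable_const _).add ((hs w).const_mul _)
  have hp : Integrable (fun z => ⨆ w, (A w + 2 * f z w)) P :=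
    aux_int_sup fun w => (integrable_const _).add ((hf w).const_mul _)
  have hm : Integrable (fun z => ⨆ w, (A w - 2 * f z w)) P :=
    aux_int_sup fun w => (integrable_const _).sub ((hf w).const_mul _)
  rw [integral_prod _ hI]
  simp only [aux_rad_int, auxSgn, if_true, Bool.false_eq_true, if_false, one_mul, neg_mul,
    mul_neg, ← sub_eq_add_neg]
  have h1 : (⨆ w, (A w + 2 * ∫ z', f z' w ∂P)) ≤ ∫ z, ⨆ w, (A w + 2 * f z w) ∂P := by
    refine ciSup_le fun w => ?_
    have : A w + 2 * ∫ z', f z' w ∂P = ∫ z', (A w + 2 * f z' w) ∂P := by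
      rw [integral_add (integrable_const _) ((hf w).const_mul _), integral_const_mul]
      simp
    rw [this]
    exact integral_mono ((integrable_const _).add ((hf w).const_mul _)) hp
      fun z => aux_le_sup (fun w => A w + 2 * f z w) w
  have h2 : ∀ z, (⨆ w, (A w + ((∫ z', f z' w ∂P) - f z w))) ≤
      ((⨆ w, (A w + 2 * ∫ z', f z' w ∂P)) + ⨆ w, (A w - 2 * f z w)) / 2 := by
    intro z
    refine ciSup_le fun w => ?_
    have a1 := aux_le_sup (fun w => A w + 2 * ∫ z', f z' w ∂P) w
    have a2 := aux_le_sup (fun w => A w - 2 * f z w) w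
    linarith
  calc _ ≤ ∫ z, ((⨆ w, (A w + 2 * ∫ z', f z' w ∂P)) + ⨆ w, (A w - 2 * f z w)) / 2 ∂P :=
        integral_mono (aux_int_sup fun w => (integrable_const _).add
          ((integrable_const _).sub (hf w))) (((integrable_const _).add hm).div_const _) h2
    _ = ((⨆ w, (A w + 2 * ∫ z', f z' w ∂P)) + ∫ z, ⨆ w, (A w - 2 * f z w) ∂P) / 2 := by
        rw [integral_div, integral_add (integrable_const _) hm]
        simp
    _ ≤ ((∫ z, ⨆ w, (A w + 2 * f z w) ∂P) + ∫ z, ⨆ w, (A w - 2 * f z w) ∂P) / 2 := by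
        gcongr
    _ = _ := by
        rw [integral_div, integral_add hp hm]

lemma aux_symm {ι Z : Type*} [Fintype ι] [Nonempty ι] [MeasurableSpace Z] (P : Measure Z)
    [IsProbabilityMeasure P] (n : ℕ) (f : Z → ι → ℝ) (hf : ∀ w, Integrable (fun z => f z w) P) :
    ∫ S, ⨆ w, ∑ i : Fin n, ((∫ z', f z' w ∂P) - f (S i) w) ∂(Measure.pi fun _ => P) ≤
      ∫ S, ∫ b, ⨆ w, 2 * ∑ i : Fin n, auxSgn (b i) * f (S i) w
        ∂(Measure.pi fun _ : Fin n => auxRad) ∂(Measure.pi fun _ : Fin n => P) := by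
  have hs : ∀ w, Integrable (fun z : Z × Bool => auxSgn z.2 * f z.1 w) (P.prod auxRad) := by
    intro w
    have := Integrable.mul_prod (hf w) (Integrable.of_finite (f := auxSgn) (μ := auxRad))
    simpa [mul_comm] using this
  have h := aux_tensor P (P.prod auxRad) n
    (fun i z w => (∫ z', f z' w ∂P) - f z w) (fun i z w => 2 * (auxSgn z.2 * f z.1 w))
    (fun i w => (integrable_const _).sub (hf w)) (fun i w => (hs w).const_mul _)
    (fun i A => aux_symm_step P f hf A) (fun _ => 0)
  simp only [zero_add] at h
  refine h.trans (le_of_eq ?_)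
  have hmp := measurePreserving_arrowProdEquivProdArrow Z Bool (Fin n) (fun _ => P) (fun _ => auxRad)
  have hsI : ∀ w, Integrable (fun s : Fin n → Z × Bool =>
      2 * ∑ i, auxSgn (s i).2 * f (s i).1 w) (Measure.pi fun _ => P.prod auxRad) := by
    intro w
    refine Integrable.const_mul (integrable_finsetSum _ fun i _ => ?_) _
    exact integrable_comp_eval (μ := fun _ => P.prod auxRad) (i := i)
      (f := fun z : Z × Bool => auxSgn z.2 * f z.1 w) (hs w)
  have hI := aux_int_sup hsI
  have hI2 : Integrable (fun x : (Fin n → Z) × (Fin n → Bool) =>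
      ⨆ w, 2 * ∑ i, auxSgn (x.2 i) * f (x.1 i) w)
      ((Measure.pi fun _ => P).prod (Measure.pi fun _ => auxRad)) :=
    (hmp.integrable_comp_emb (MeasurableEquiv.measurableEmbedding _)).1 hI
  rw [← integral_prod _ hI2, ← hmp.integral_comp']
  simp only [Finset.mul_sum]
  rfl

lemma aux_kahane_fin {F κ : Type*} [NormedAddCommGroup F] [InnerProductSpace ℝ F] [Fintype κ]
    (b : OrthonormalBasis κ ℝ F) (n : ℕ) (φ : Fin n → F) (p : ℝ) (hp : 2 ≤ p) :
    Integrable (fun g : Fin n → ℝ => ‖∑ i, g i • φ i‖ ^ p)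
      (Measure.pi fun _ : Fin n => gaussianReal 0 1) ∧
    ∫ g : Fin n → ℝ, ‖∑ i, g i • φ i‖ ^ p ∂(Measure.pi fun _ : Fin n => gaussianReal 0 1) ≤
      (√(∑ i, ‖φ i‖ ^ 2)) ^ p * ∫ x : ℝ, |x| ^ p ∂(gaussianReal 0 1) := by
  set γ := Measure.pi fun _ : Fin n => gaussianReal 0 1 with hγ
  set τ := ∫ x : ℝ, |x| ^ p ∂(gaussianReal 0 1) with hτ
  have hτ1 : 1 ≤ τ := aux_gauss_ge_one p hp
  set K : κ → ℝ := fun k => ∑ i, (inner ℝ (b k) (φ i)) ^ 2 with hK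
  have hK0 : ∀ k, 0 ≤ K k := fun k => Finset.sum_nonneg fun i _ => sq_nonneg _
  set KK : ℝ := ∑ i, ‖φ i‖ ^ 2 with hKK
  have hsumK : ∑ k, K k = KK := by
    rw [hK, Finset.sum_comm]
    refine Finset.sum_congr rfl fun i _ => ?_
    rw [← b.sum_sq_norm_inner_right]
    simp
  have hKK0 : 0 ≤ KK := Finset.sum_nonneg fun i _ => sq_nonneg _
  rcases hKK0.eq_or_lt with hz | hpos
  · have hφ : ∀ i, φ i = 0 := by
      intro i
      have := (Finset.sum_eq_zero_iff_of_nonneg (fun i _ => sq_nonneg ‖φ i‖)).1 hz.symm i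
        (Finset.mem_univ i)
      simpa using this
    have hp0 : p ≠ 0 := by linarith
    simp [hφ, Real.zero_rpow hp0]
    positivity
  set y : κ → (Fin n → ℝ) → ℝ := fun k g => ∑ i, (inner ℝ (b k) (φ i) / √(K k)) * g i with hy
  have hX : ∀ k g, (inner ℝ (b k) (∑ i, g i • φ i)) = √(K k) * y k g := by
    intro k g
    rw [inner_sum, hy]
    simp only [inner_smul_right]
    rw [Finset.mul_sum]
    refine Finset.sum_congr rfl fun i _ => ?_
    rcases (hK0 k).eq_or_lt with h0 | h0
    · have := (Finset.sum_eq_zero_iff_of_nonneg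
        (fun i _ => sq_nonneg (inner ℝ (b k) (φ i)))).1 h0.symm i (Finset.mem_univ i)
      have h' : inner ℝ (b k) (φ i) = 0 := by simpa using this
      simp [h']
    · have : √(K k) ≠ 0 := (Real.sqrt_pos.2 h0).ne'
      field_simp
  have hnorm : ∀ g : Fin n → ℝ, ‖∑ i, g i • φ i‖ ^ 2 = ∑ k, K k * (y k g) ^ 2 := by
    intro g
    rw [← b.sum_sq_norm_inner_right]
    refine Finset.sum_congr rfl fun k _ => ?_
    rw [hX, Real.norm_eq_abs, sq_abs, mul_pow, Real.sq_sqrt (hK0 k)]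
  have hyint := fun k => aux_gauss_int (fun i => inner ℝ (b k) (φ i) / √(K k)) p (by linarith)
  have hymom : ∀ k, ∫ g, |y k g| ^ p ∂γ ≤ τ := by
    intro k
    rw [hγ, hy, (hyint k).2]
    have h1 : √(∑ i, (inner ℝ (b k) (φ i) / √(K k)) ^ 2) ≤ 1 := by
      rw [Real.sqrt_le_iff]
      refine ⟨zero_le_one, ?_⟩
      rw [one_pow]
      simp only [div_pow, Real.sq_sqrt (hK0 k)]
      rw [← Finset.sum_div]
      exact div_self_le_one _
    have h2 := Real.rpow_le_one (Real.sqrt_nonneg _) h1 (by linarith : 0 ≤ p)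
    nlinarith
  have hpt : ∀ g : Fin n → ℝ, ‖∑ i, g i • φ i‖ ^ p ≤
      (√KK) ^ p * ∑ k, K k / KK * |y k g| ^ p := by
    intro g
    have e1 : ∀ x : ℝ, |x| ^ p = (x ^ 2) ^ (p / 2) := by
      intro x
      rw [← sq_abs, ← Real.rpow_natCast, ← Real.rpow_mul (abs_nonneg x)]
      congr 1; push_cast; ring
    have e2 : ‖∑ i, g i • φ i‖ ^ p = (∑ k, K k * (y k g) ^ 2) ^ (p / 2) := by
      rw [← hnorm, ← e1, abs_of_nonneg (norm_nonneg _)]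
    have e3 : √KK ^ p = KK ^ (p / 2) := by
      rw [← abs_of_nonneg (Real.sqrt_nonneg KK), e1, Real.sq_sqrt hKK0]
    have e4 : ∑ k, K k * (y k g) ^ 2 = KK * ∑ k, K k / KK * (y k g) ^ 2 := by
      rw [Finset.mul_sum]
      refine Finset.sum_congr rfl fun k _ => ?_
      field_simp
    rw [e2, e3, e4, Real.mul_rpow hKK0
      (Finset.sum_nonneg fun k _ => mul_nonneg (div_nonneg (hK0 k) hKK0) (sq_nonneg _))]
    gcongr
    have := Real.rpow_arith_mean_le_arith_mean_rpow Finset.univ (fun k => K k / KK)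
      (fun k => (y k g) ^ 2) (fun k _ => div_nonneg (hK0 k) hKK0)
      (by rw [← Finset.sum_div, hsumK]; exact div_self hpos.ne') (fun k _ => sq_nonneg _)
      (p := p / 2) (by linarith)
    simpa only [e1] using this
  have hRI : Integrable (fun g => (√KK) ^ p * ∑ k, K k / KK * |y k g| ^ p) γ :=
    (integrable_finsetSum _ fun k _ => (hyint k).1.const_mul _).const_mul _
  have hLI : Integrable (fun g : Fin n → ℝ => ‖∑ i, g i • φ i‖ ^ p) γ := by
    refine hRI.mono' ?_ (Filter.Eventually.of_forall fun g => ?_)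
    · refine Continuous.aestronglyMeasurable ?_
      refine Continuous.rpow_const (by fun_prop) fun g => Or.inr (by linarith)
    · rw [Real.norm_eq_abs, abs_of_nonneg (by positivity)]
      exact hpt g
  refine ⟨hLI, (integral_mono hLI hRI hpt).trans ?_⟩
  rw [integral_const_mul, integral_finsetSum _ fun k _ => (hyint k).1.const_mul _]
  gcongr
  calc ∑ k, ∫ g, K k / KK * |y k g| ^ p ∂γ ≤ ∑ k, K k / KK * τ := by
        refine Finset.sum_le_sum fun k _ => ?_
        rw [integral_const_mul]
        exact mul_le_mul_of_nonneg_left (hymom k) (div_nonneg (hK0 k) hKK0)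
    _ = τ := by
        rw [← Finset.sum_mul, ← Finset.sum_div, hsumK, div_self hpos.ne', one_mul]

lemma aux_kahane {E : Type*} [NormedAddCommGroup E] [InnerProductSpace ℝ E]
    (n : ℕ) (φ : Fin n → E) (p : ℝ) (hp : 2 ≤ p) :
    Integrable (fun g : Fin n → ℝ => ‖∑ i, g i • φ i‖ ^ p)
      (Measure.pi fun _ : Fin n => gaussianReal 0 1) ∧
    ∫ g : Fin n → ℝ, ‖∑ i, g i • φ i‖ ^ p ∂(Measure.pi fun _ : Fin n => gaussianReal 0 1) ≤
      (√(∑ i, ‖φ i‖ ^ 2)) ^ p * ∫ x : ℝ, |x| ^ p ∂(gaussianReal 0 1) := by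
  set F := Submodule.span ℝ (Set.range φ) with hF
  have : FiniteDimensional ℝ F := FiniteDimensional.span_of_finite ℝ (Set.finite_range φ)
  let φ' : Fin n → F := fun i => ⟨φ i, Submodule.subset_span ⟨i, rfl⟩⟩
  have h := aux_kahane_fin (stdOrthonormalBasis ℝ F) n φ' p hp
  have e : ∀ g : Fin n → ℝ, ‖∑ i, g i • φ' i‖ = ‖∑ i, g i • φ i‖ := by
    intro g
    rw [Submodule.coe_norm]
    simp [φ']
  have e2 : ∀ i, ‖φ' i‖ = ‖φ i‖ := fun i => rfl
  simpa only [e, e2] using h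

/-- Gaussian complexity bound -/
lemma aux_gauss_complexity {E ι : Type*} [NormedAddCommGroup E] [InnerProductSpace ℝ E]
    [Fintype ι] [Nonempty ι] (n c : ℕ) (φ : Fin n → E) (p q Λ : ℝ) (hpq : q.HolderConjugate p)
    (hp : 2 ≤ p) (hΛ : 0 ≤ Λ) (W : ι → Fin c → E)
    (hW : ∀ w, (∑ j, ‖W w j‖ ^ q) ^ (1 / q) ≤ Λ) :
    ∫ g : Fin n → Fin c → ℝ, ⨆ w, ∑ i, ∑ j, inner ℝ (W w j) (φ i) * g i j
        ∂(Measure.pi fun _ : Fin n => Measure.pi fun _ : Fin c => gaussianReal 0 1) ≤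
      Λ * ((c : ℝ) ^ (1 / p) * (∫ x : ℝ, |x| ^ p ∂(gaussianReal 0 1)) ^ (1 / p) *
        √(∑ i, ‖φ i‖ ^ 2)) := by
  set G := Measure.pi fun _ : Fin n => Measure.pi fun _ : Fin c => gaussianReal 0 1 with hG
  set τ := ∫ x : ℝ, |x| ^ p ∂(gaussianReal 0 1) with hτ
  have hτ1 : 1 ≤ τ := aux_gauss_ge_one p hp
  have hp0 : 0 < p := by linarith
  obtain ⟨hki, hkb⟩ := aux_kahane n φ p hp
  have hcol : ∀ j : Fin c, MeasurePreserving (fun (g : Fin n → Fin c → ℝ) (i : Fin n) => g i j) G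
      (Measure.pi fun _ : Fin n => gaussianReal 0 1) := fun j =>
    measurePreserving_pi _ _ (f := fun _ (x : Fin c → ℝ) => x j)
      (fun i => measurePreserving_eval (fun _ : Fin c => gaussianReal 0 1) j)
  have hVi : ∀ j, Integrable (fun g : Fin n → Fin c → ℝ => ‖∑ i, g i j • φ i‖ ^ p) G :=
    fun j => (hcol j).integrable_comp_of_integrable hki
  have hVm : ∀ j, ∫ g : Fin n → Fin c → ℝ, ‖∑ i, g i j • φ i‖ ^ p ∂G ≤
      (√(∑ i, ‖φ i‖ ^ 2)) ^ p * τ := by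
    intro j
    refine le_trans (le_of_eq ?_) hkb
    rw [← (hcol j).map_eq, integral_map (hcol j).measurable.aemeasurable]
    refine Continuous.aestronglyMeasurable ?_
    exact Continuous.rpow_const (by fun_prop) fun g => Or.inr (by linarith)
  set Y : (Fin n → Fin c → ℝ) → ℝ := fun g => ∑ j, ‖∑ i, g i j • φ i‖ ^ p with hY
  have hYi : Integrable Y G := integrable_finsetSum _ fun j _ => hVi j
  have hY0 : ∀ g, 0 ≤ Y g := fun g => Finset.sum_nonneg fun j _ => by positivity
  have hYm : ∫ g, Y g ∂G ≤ c * ((√(∑ i, ‖φ i‖ ^ 2)) ^ p * τ) := by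
    rw [hY, integral_finsetSum _ fun j _ => hVi j]
    refine (Finset.sum_le_sum fun j _ => hVm j).trans (by simp)
  have hsup : ∀ g, (⨆ w, ∑ i, ∑ j, inner ℝ (W w j) (φ i) * g i j) ≤ Λ * (Y g) ^ (1 / p) := by
    intro g
    refine ciSup_le fun w => ?_
    calc ∑ i, ∑ j, inner ℝ (W w j) (φ i) * g i j
        = ∑ j, inner ℝ (W w j) (∑ i, g i j • φ i) := by
          rw [Finset.sum_comm]
          refine Finset.sum_congr rfl fun j _ => ?_
          rw [inner_sum]
          refine Finset.sum_congr rfl fun i _ => ?_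
          rw [inner_smul_right, mul_comm]
      _ ≤ ∑ j, ‖W w j‖ * ‖∑ i, g i j • φ i‖ :=
          Finset.sum_le_sum fun j _ => real_inner_le_norm _ _
      _ ≤ (∑ j, ‖W w j‖ ^ q) ^ (1 / q) * (∑ j, ‖∑ i, g i j • φ i‖ ^ p) ^ (1 / p) :=
          Real.inner_le_Lp_mul_Lq_of_nonneg _ hpq (fun _ _ => norm_nonneg _)
            (fun _ _ => norm_nonneg _)
      _ ≤ _ := by
          gcongr
          exact hW w
  have hroot : Integrable (fun g => (Y g) ^ (1 / p)) G ∧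
      ∫ g, (Y g) ^ (1 / p) ∂G ≤ (∫ g, Y g ∂G) ^ (1 / p) := by
    have hle : ∀ g, (Y g) ^ (1 / p) ≤ 1 + Y g := by
      intro g
      have h1p : 1 / p ≤ 1 := by rw [div_le_one hp0]; linarith
      calc (Y g) ^ (1 / p) ≤ (1 + Y g) ^ (1 / p) := by
            apply Real.rpow_le_rpow (hY0 g) (by linarith) (by positivity)
        _ ≤ (1 + Y g) ^ (1 : ℝ) :=
            Real.rpow_le_rpow_of_exponent_le (by linarith [hY0 g]) h1p
        _ = _ := Real.rpow_one _
    have hi : Integrable (fun g => (Y g) ^ (1 / p)) G := by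
      refine ((integrable_const 1).add hYi).mono'
        (hYi.aemeasurable.pow_const _).aestronglyMeasurable (Filter.Eventually.of_forall fun g => ?_)
      rw [Real.norm_eq_abs, abs_of_nonneg (Real.rpow_nonneg (hY0 g) _)]
      exact hle g
    refine ⟨hi, ?_⟩
    have hc := Real.concaveOn_rpow (p := 1 / p) (by positivity) (by rw [div_le_one hp0]; linarith)
    exact hc.le_map_integral (Continuous.continuousOn
      (Continuous.rpow_const continuous_id fun _ => Or.inr (by positivity))) isClosed_Ici
      (Filter.Eventually.of_forall fun g => hY0 g) hYi hi
  have hsi : Integrable (fun g : Fin n → Fin c → ℝ =>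
      ⨆ w, ∑ i, ∑ j, inner ℝ (W w j) (φ i) * g i j) G := by
    refine aux_int_sup fun w => integrable_finsetSum _ fun i _ => ?_
    exact integrable_comp_eval (μ := fun _ => Measure.pi fun _ : Fin c => gaussianReal 0 1) (i := i)
      (f := fun x : Fin c → ℝ => ∑ j, inner ℝ (W w j) (φ i) * x j) (aux_gauss_l1 _).1
  calc _ ≤ ∫ g, Λ * (Y g) ^ (1 / p) ∂G := integral_mono hsi (hroot.1.const_mul _) hsup
    _ = Λ * ∫ g, (Y g) ^ (1 / p) ∂G := integral_const_mul _ _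
    _ ≤ Λ * (c * ((√(∑ i, ‖φ i‖ ^ 2)) ^ p * τ)) ^ (1 / p) := by
        gcongr
        refine hroot.2.trans ?_
        exact Real.rpow_le_rpow (integral_nonneg hY0) hYm (by positivity)
    _ = _ := by
        rw [Real.mul_rpow (by positivity) (by positivity), Real.mul_rpow (by positivity)
          (by positivity), ← Real.rpow_mul (by positivity), mul_one_div_cancel hp0.ne',
          Real.rpow_one]
        ring

lemma aux_meas_sup {ι α : Type*} [Fintype ι] [Nonempty ι] [MeasurableSpace α] (f : ι → α → ℝ)
    (hf : ∀ w, Measurable (f w)) : Measurable fun a => ⨆ w, f w a := by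
  exact Measurable.iSup hf

lemma aux_sup_le_add {ι : Type*} [Finite ι] [Nonempty ι] (f g : ι → ℝ) (a : ℝ)
    (h : ∀ w, f w ≤ g w + a) : (⨆ w, f w) ≤ (⨆ w, g w) + a :=
  ciSup_le fun w => (h w).trans (by linarith [aux_le_sup g w])

lemma aux_one_diff {n : ℕ} {Z : Type*} (F : Fin n → Z → ℝ) (s s' : Fin n → Z) (i : Fin n)
    (h : ∀ j, j ≠ i → s j = s' j) (B : ℝ) (hB : ∀ z z', F i z ≤ F i z' + B) :
    ∑ j, F j (s j) ≤ ∑ j, F j (s' j) + B := by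
  rw [← Finset.add_sum_erase _ _ (Finset.mem_univ i),
    ← Finset.add_sum_erase _ (fun j => F j (s' j)) (Finset.mem_univ i)]
  have : ∑ j ∈ Finset.univ.erase i, F j (s j) = ∑ j ∈ Finset.univ.erase i, F j (s' j) :=
    Finset.sum_congr rfl fun j hj => by rw [h j (Finset.ne_of_mem_erase hj)]
  have := hB (s i) (s' i)
  linarith

lemma aux_finite {ι Z : Type*} [Fintype ι] [Nonempty ι] [MeasurableSpace Z] (P : Measure Z)
    [IsProbabilityMeasure P] (n : ℕ) (hn : 1 ≤ n) (f : Z → ι → ℝ)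
    (hf : ∀ w, Measurable (fun z => f z w)) (B : ℝ) (hB0 : 0 < B)
    (h0 : ∀ z w, 0 ≤ f z w) (h1 : ∀ z w, f z w ≤ B) (δ : ℝ) (hδ : 0 < δ) (hδ1 : δ < 1) :
    (Measure.pi fun _ : Fin n => P).real {S | 3 * B * √(Real.log (2 / δ) / (2 * n)) ≤
      (⨆ w, ((∫ z, f z w ∂P) - (1 / (n : ℝ)) * ∑ i, f (S i) w)) -
        2 * ((1 / (n : ℝ)) * ∫ b, ⨆ w, ∑ i, auxSgn (b i) * f (S i) w
          ∂(Measure.pi fun _ : Fin n => auxRad))} ≤ δ := by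
  have hn0 : (0 : ℝ) < n := by exact_mod_cast hn
  have hfi : ∀ w, Integrable (fun z => f z w) P := fun w =>
    (integrable_const B).mono' (hf w).aestronglyMeasurable (Filter.Eventually.of_forall fun z => by
      rw [Real.norm_eq_abs, abs_of_nonneg (h0 z w)]; exact h1 z w)
  set M : ι → ℝ := fun w => ∫ z, f z w ∂P with hM
  have hM0 : ∀ w, 0 ≤ M w := fun w => integral_nonneg fun z => h0 z w
  have hM1 : ∀ w, M w ≤ B := fun w => by
    have := integral_mono (hfi w) (integrable_const B) (fun z => h1 z w)
    simpa using this
  set A : (Fin n → Z) → ℝ := fun S => ⨆ w, (M w - (1 / (n : ℝ)) * ∑ i, f (S i) w) with hA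
  set R : (Fin n → Z) → ℝ := fun S => ∫ b, ⨆ w, ∑ i, auxSgn (b i) * f (S i) w
          ∂(Measure.pi fun _ : Fin n => auxRad) with hR
  have hsgn : ∀ b, |auxSgn b| = 1 := by intro b; cases b <;> simp [auxSgn]
  have hAm : Measurable A := by
    refine aux_meas_sup _ fun w => ?_
    refine measurable_const.sub (measurable_const.mul ?_)
    exact Finset.measurable_sum _ fun i _ => (hf w).comp (measurable_pi_apply i)
  have hRm : Measurable R := by
    have : Measurable fun x : (Fin n → Z) × (Fin n → Bool) =>
        ⨆ w, ∑ i, auxSgn (x.2 i) * f (x.1 i) w := by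
      refine aux_meas_sup _ fun w => Finset.measurable_sum _ fun i _ => ?_
      refine Measurable.mul ?_ ?_
      · exact (measurable_of_finite auxSgn).comp ((measurable_pi_apply i).comp measurable_snd)
      · exact (hf w).comp ((measurable_pi_apply i).comp measurable_fst)
    exact this.stronglyMeasurable.integral_prod_right.measurable
  have hRi : ∀ S : Fin n → Z, Integrable (fun b : Fin n → Bool => ⨆ w, ∑ i, auxSgn (b i) * f (S i) w)
      (Measure.pi fun _ : Fin n => auxRad) := fun S => .of_finite
  have hAb : ∀ S, |A S| ≤ 2 * B := by
    intro S
    have hs0 : ∀ w, 0 ≤ (1 / (n : ℝ)) * ∑ i, f (S i) w := fun w =>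
      mul_nonneg (by positivity) (Finset.sum_nonneg fun i _ => h0 _ _)
    have hs1 : ∀ w, (1 / (n : ℝ)) * ∑ i, f (S i) w ≤ B := fun w => by
      have : ∑ i, f (S i) w ≤ n * B := by
        refine (Finset.sum_le_sum fun i _ => h1 (S i) w).trans (by simp)
      calc _ ≤ (1 / (n : ℝ)) * (n * B) := by gcongr
        _ = B := by field_simp
    rw [abs_le]
    constructor
    · obtain ⟨w⟩ := ‹Nonempty ι›
      have := aux_le_sup (fun w => M w - (1 / (n : ℝ)) * ∑ i, f (S i) w) w
      have a := hs1 w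
      have b := hM0 w
      simp only [hA]
      linarith
    · refine ciSup_le fun w => ?_
      linarith [hs0 w, hM1 w]
  have hRb : ∀ S, |R S| ≤ n * B := by
    intro S
    have hpt : ∀ b : Fin n → Bool, ‖⨆ w, ∑ i, auxSgn (b i) * f (S i) w‖ ≤ n * B := by
      intro b
      have hh : ∀ w, |∑ i, auxSgn (b i) * f (S i) w| ≤ n * B := by
        intro w
        refine (Finset.abs_sum_le_sum_abs _ _).trans ?_
        refine (Finset.sum_le_sum (g := fun _ => B) fun i _ => ?_).trans (by simp)
        rw [abs_mul, hsgn, one_mul, abs_of_nonneg (h0 _ _)]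
        exact h1 _ _
      obtain ⟨w, hw⟩ := exists_eq_ciSup_of_finite (f := fun w => ∑ i, auxSgn (b i) * f (S i) w)
      rw [← hw]
      exact hh w
    have := norm_integral_le_of_norm_le_const (μ := Measure.pi fun _ : Fin n => auxRad)
      (Filter.Eventually.of_forall hpt)
    simpa using this
  set c := 3 * B / n with hc
  have hmain := aux_mcd_tail P c (2 * B + 2 * B) (by positivity) n hn
    (fun S => A S - 2 * ((1 / (n : ℝ)) * R S)) (hAm.sub ((hRm.const_mul _).const_mul _))
    (fun S => by
      refine (abs_sub _ _).trans (add_le_add (hAb S) ?_)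
      rw [abs_mul, abs_mul, abs_of_nonneg (by positivity : (0 : ℝ) ≤ 1 / n), abs_two]
      have : 1 / (n : ℝ) * |R S| ≤ 1 / n * (n * B) := by gcongr; exact hRb S
      have e : 1 / (n : ℝ) * (n * B) = B := by field_simp
      linarith)
    (fun s s' i h => by
      have a1 : A s ≤ A s' + B / n := by
        refine aux_sup_le_add _ _ _ fun w => ?_
        have := aux_one_diff (fun _ z => - f z w) s s' i h B
          (fun z z' => by linarith [h0 z w, h1 z' w])
        simp only [Finset.sum_neg_distrib] at this
        have := mul_le_mul_of_nonneg_left this (by positivity : 0 ≤ 1 / (n : ℝ))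
        have e : 1 / (n : ℝ) * (-∑ j, f (s' j) w + B) = - (1 / n * ∑ j, f (s' j) w) + B / n := by ring
        linarith
      have a2 : R s' ≤ R s + B := by
        have e : R s + B = ∫ b, ((⨆ w, ∑ i, auxSgn (b i) * f (s i) w) + B)
            ∂(Measure.pi fun _ : Fin n => auxRad) := by
          rw [integral_add (hRi s) (integrable_const _)]; simp [hR]
        rw [e]
        refine integral_mono (hRi s') ((hRi s).add (integrable_const _)) fun b => ?_
        refine aux_sup_le_add _ _ _ fun w => ?_
        refine aux_one_diff (fun j z => auxSgn (b j) * f z w) s' s i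
          (fun j hj => (h j hj).symm) B (fun z z' => ?_)
        have u1 := h0 z w
        have u2 := h0 z' w
        have u3 := h1 z w
        have u4 := h1 z' w
        cases b i <;> simp [auxSgn] <;> linarith
      have := mul_le_mul_of_nonneg_left a2 (by positivity : 0 ≤ 1 / (n : ℝ))
      have e : 1 / (n : ℝ) * (R s + B) = 1 / n * R s + B / n := by ring
      have e2 : c = 3 * (B / n) := by rw [hc]; ring
      linarith)
    (by
      have hsy := aux_symm P n f hfi
      have hAI : Integrable A (Measure.pi fun _ : Fin n => P) :=
        (integrable_const (2 * B)).mono' hAm.aestronglyMeasurable (Filter.Eventually.of_forall hAb)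
      have hRI : Integrable R (Measure.pi fun _ : Fin n => P) :=
        (integrable_const (n * B)).mono' hRm.aestronglyMeasurable (Filter.Eventually.of_forall hRb)
      rw [integral_sub hAI ((hRI.const_mul _).const_mul _), integral_const_mul, integral_const_mul]
      have e1 : ∀ S : Fin n → Z, (⨆ w, ∑ i : Fin n, ((∫ z', f z' w ∂P) - f (S i) w)) = n * A S := by
        intro S
        rw [hA, Real.mul_iSup_of_nonneg hn0.le]
        congr 1; ext w
        rw [Finset.sum_sub_distrib]
        simp [hM]
        field_simp
      have e2 : ∀ S : Fin n → Z, ∫ b, ⨆ w, 2 * ∑ i : Fin n, auxSgn (b i) * f (S i) w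
        ∂(Measure.pi fun _ : Fin n => auxRad) = 2 * R S := by
        intro S
        rw [hR, ← integral_const_mul]
        congr 1; ext b
        rw [Real.mul_iSup_of_nonneg (by norm_num)]
      simp only [e1, e2, integral_const_mul] at hsy
      have := mul_le_mul_of_nonneg_left hsy (by positivity : 0 ≤ 1 / (n : ℝ))
      have e3 : 1 / (n : ℝ) * (n * ∫ a, A a ∂(Measure.pi fun _ : Fin n => P)) =
        ∫ a, A a ∂(Measure.pi fun _ : Fin n => P) := by field_simp
      rw [e3] at this
      linarith)
    (3 * B * √(Real.log (2 / δ) / (2 * n))) (by positivity)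
  refine hmain.trans ?_
  have hlog : 0 ≤ Real.log (2 / δ) := Real.log_nonneg (by rw [le_div_iff₀ hδ]; linarith)
  have e : 2 * (3 * B * √(Real.log (2 / δ) / (2 * n))) ^ 2 / (n * c ^ 2) = Real.log (2 / δ) := by
    rw [mul_pow, Real.sq_sqrt (by positivity), hc]
    field_simp
  rw [e, Real.exp_neg, Real.exp_log (by positivity), inv_div]
  linarith

lemma aux_margin {X : Type*} {c : ℕ} (hc : 2 ≤ c) (h h' : X → Fin c → ℝ) (x : X) (y : Fin c) :
    |mcMargin h x y - mcMargin h' x y| ≤ √2 * √(∑ j, (h x j - h' x j) ^ 2) := by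
  have hne : Nonempty {y' : Fin c // y' ≠ y} := by
    have : Nontrivial (Fin c) := Fin.nontrivial_iff_two_le.2 hc
    obtain ⟨y', hy'⟩ := exists_ne y
    exact ⟨⟨y', hy'⟩⟩
  have key : ∃ y' : Fin c, y' ≠ y ∧
      |(⨆ y' : {y' : Fin c // y' ≠ y}, h x y'.1) - ⨆ y' : {y' : Fin c // y' ≠ y}, h' x y'.1| ≤
        |h x y' - h' x y'| := by
    obtain ⟨a, ha⟩ := exists_eq_ciSup_of_finite (f := fun y' : {y' : Fin c // y' ≠ y} => h x y'.1)
    obtain ⟨b, hb⟩ := exists_eq_ciSup_of_finite (f := fun y' : {y' : Fin c // y' ≠ y} => h' x y'.1)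
    have h1 := aux_le_sup (fun y' : {y' : Fin c // y' ≠ y} => h x y'.1) b
    have h2 := aux_le_sup (fun y' : {y' : Fin c // y' ≠ y} => h' x y'.1) a
    rw [← ha] at h1
    rw [← hb] at h2
    rw [← ha, ← hb]
    rcases le_total (h x a.1) (h' x b.1) with hh | hh
    · refine ⟨b.1, b.2, ?_⟩
      rw [abs_of_nonpos (by linarith), abs_of_nonpos (by linarith)]
      linarith
    · refine ⟨a.1, a.2, ?_⟩
      rw [abs_of_nonneg (by linarith), abs_of_nonneg (by linarith)]
      linarith
  obtain ⟨y', hy', hk⟩ := key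
  have h1 : |mcMargin h x y - mcMargin h' x y| ≤ |h x y - h' x y| + |h x y' - h' x y'| := by
    unfold mcMargin
    have : ∀ a b d e : ℝ, a - b - (d - e) = (a - d) - (b - e) := fun a b d e => by ring
    rw [this]
    exact (abs_sub _ _).trans (add_le_add le_rfl hk)
  have h2 : |h x y - h' x y| ^ 2 + |h x y' - h' x y'| ^ 2 ≤ ∑ j, (h x j - h' x j) ^ 2 := by
    simp only [sq_abs]
    rw [← Finset.sum_pair (f := fun j => (h x j - h' x j) ^ 2) hy'.symm]
    exact Finset.sum_le_sum_of_subset_of_nonneg (Finset.subset_univ _) fun _ _ _ => sq_nonneg _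
  refine h1.trans ?_
  rw [← Real.sqrt_mul (by norm_num)]
  apply Real.le_sqrt_of_sq_le
  nlinarith [sq_nonneg (|h x y - h' x y| - |h x y' - h' x y'|)]

lemma aux_margin_meas {X E : Type*} [MeasurableSpace X] [NormedAddCommGroup E]
    [InnerProductSpace ℝ E] [MeasurableSpace E] [BorelSpace E] {c : ℕ} (hc : 2 ≤ c)
    (φ : X → E) (hφ : Measurable φ) (w : Fin c → E) :
    Measurable fun z : X × Fin c => mcMargin (fun x' j => ⟪w j, φ x'⟫) z.1 z.2 := by
  have hi : ∀ v : E, Measurable fun x => ⟪v, φ x⟫ := fun v =>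
    (continuous_const.inner continuous_id).measurable.comp hφ
  refine measurable_from_prod_countable_left fun y => ?_
  have hne : Nonempty {y' : Fin c // y' ≠ y} := by
    have : Nontrivial (Fin c) := Fin.nontrivial_iff_two_le.2 hc
    obtain ⟨y', hy'⟩ := exists_ne y
    exact ⟨⟨y', hy'⟩⟩
  unfold mcMargin
  exact (hi (w y)).sub (aux_meas_sup (fun (y' : {y' : Fin c // y' ≠ y}) x => ⟪w y'.1, φ x⟫) fun y' => hi _)

lemma aux_rad_bound {X E ι : Type*} [NormedAddCommGroup E] [InnerProductSpace ℝ E]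
    [Fintype ι] [Nonempty ι] (n c : ℕ) (hc : 2 ≤ c) (φ : X → E) (p q Λ : ℝ)
    (hpq : q.HolderConjugate p) (hp : 2 ≤ p) (hΛ : 0 ≤ Λ) (W : ι → Fin c → E)
    (hW : ∀ w, norm2q q (W w) ≤ Λ) (ℓ : ℝ → ℝ) (L : ℝ) (hL : 0 ≤ L)
    (hℓLip : ∀ t₁ t₂, |ℓ t₁ - ℓ t₂| ≤ L * |t₁ - t₂|) (S : Fin n → X × Fin c) :
    ∫ b, ⨆ w, ∑ i, auxSgn (b i) * ℓ (mcMargin (fun x' j => ⟪W w j, φ x'⟫) (S i).1 (S i).2)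
        ∂(Measure.pi fun _ : Fin n => auxRad) ≤
      √π * L * (Λ * ((c : ℝ) ^ (1 / p) * (∫ x : ℝ, |x| ^ p ∂(gaussianReal 0 1)) ^ (1 / p) *
        √(∑ i, ‖φ (S i).1‖ ^ 2))) := by
  have h1 := aux_contr n
    (fun i w => ℓ (mcMargin (fun x' j => ⟪W w j, φ x'⟫) (S i).1 (S i).2))
    (fun i w j => ⟪W w j, φ (S i).1⟫) (L * √2) (by positivity) (fun i w w' => by
      refine (hℓLip _ _).trans ?_
      rw [mul_assoc]
      exact mul_le_mul_of_nonneg_left (aux_margin hc _ _ _ _) hL)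
  refine h1.trans ?_
  have e : L * √2 * √(π / 2) = √π * L := by
    rw [mul_assoc, ← Real.sqrt_mul (by norm_num), mul_div_cancel₀ _ (by norm_num : (2 : ℝ) ≠ 0),
      mul_comm]
  rw [e]
  have h2 := aux_gauss_complexity n c (fun i => φ (S i).1) p q Λ hpq hp hΛ W hW
  have h3 := mul_le_mul_of_nonneg_left h2 (by positivity : 0 ≤ √π * L)
  refine le_trans (le_of_eq ?_) h3
  rw [← integral_const_mul]
  congr 1; ext g
  rw [Real.mul_iSup_of_nonneg (by positivity)]

/-- loss of the linear hypothesis `w` at the labelled point `z` -/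
noncomputable def auxLoss {X E : Type*} [NormedAddCommGroup E] [InnerProductSpace ℝ E] {c : ℕ}
    (ℓ : ℝ → ℝ) (φ : X → E) (w : Fin c → E) (z : X × Fin c) : ℝ :=
  ℓ (mcMargin (fun x' j => ⟪w j, φ x'⟫) z.1 z.2)

lemma aux_loss_lip {X E : Type*} [NormedAddCommGroup E] [InnerProductSpace ℝ E] {c : ℕ}
    (hc : 2 ≤ c) (ℓ : ℝ → ℝ) (L : ℝ) (hL : 0 ≤ L)
    (hℓLip : ∀ t₁ t₂, |ℓ t₁ - ℓ t₂| ≤ L * |t₁ - t₂|)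
    (φ : X → E) (w w' : Fin c → E) (z : X × Fin c) :
    |auxLoss ℓ φ w z - auxLoss ℓ φ w' z| ≤
      L * (√2 * √(∑ j, (⟪w j, φ z.1⟫ - ⟪w' j, φ z.1⟫) ^ 2)) :=
  (hℓLip _ _).trans (mul_le_mul_of_nonneg_left (aux_margin hc _ _ _ _) hL)

lemma aux_loss_tendsto {X E : Type*} [NormedAddCommGroup E] [InnerProductSpace ℝ E] {c : ℕ}
    (hc : 2 ≤ c) (ℓ : ℝ → ℝ) (L : ℝ) (hL : 0 ≤ L)
    (hℓLip : ∀ t₁ t₂, |ℓ t₁ - ℓ t₂| ≤ L * |t₁ - t₂|)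
    (φ : X → E) (z : X × Fin c) (u : ℕ → Fin c → E) (w : Fin c → E)
    (hu : Filter.Tendsto u Filter.atTop (nhds w)) :
    Filter.Tendsto (fun k => auxLoss ℓ φ (u k) z) Filter.atTop (nhds (auxLoss ℓ φ w z)) := by
  rw [tendsto_iff_norm_sub_tendsto_zero]
  have hcont : Continuous fun v : Fin c → E =>
      L * (√2 * √(∑ j, (⟪v j, φ z.1⟫ - ⟪w j, φ z.1⟫) ^ 2)) := by fun_prop
  have h := (hcont.tendsto w).comp hu
  refine squeeze_zero (fun _ => norm_nonneg _)
    (fun k => aux_loss_lip hc ℓ L hL hℓLip φ (u k) w z) ?_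
  simpa [Function.comp_def] using h

lemma aux_loss_meas {X E : Type*} [MeasurableSpace X] [NormedAddCommGroup E]
    [InnerProductSpace ℝ E] [MeasurableSpace E] [BorelSpace E] {c : ℕ} (hc : 2 ≤ c)
    (ℓ : ℝ → ℝ) (hℓanti : ∀ s t : ℝ, s ≤ t → ℓ t ≤ ℓ s)
    (φ : X → E) (hφ : Measurable φ) (w : Fin c → E) : Measurable (auxLoss ℓ φ w) := by
  have h1 : Measurable ℓ := Antitone.measurable fun s t h => hℓanti s t h
  exact h1.comp (aux_margin_meas hc φ hφ w)

lemma aux_countable {X E : Type*} [MeasurableSpace X] [NormedAddCommGroup E]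
    [InnerProductSpace ℝ E] [MeasurableSpace E] [BorelSpace E]
    (n c : ℕ) (hn : 1 ≤ n) (hc : 2 ≤ c)
    (P : Measure (X × Fin c)) [IsProbabilityMeasure P]
    (φ : X → E) (hφ : Measurable φ) (p q Λ : ℝ)
    (hpq : q.HolderConjugate p) (hp : 2 ≤ p) (hΛ : 0 ≤ Λ)
    (ℓ : ℝ → ℝ) (L : ℝ) (hL : 0 ≤ L) (hℓ₀ : ∀ t, 0 ≤ ℓ t)
    (hℓLip : ∀ t₁ t₂, |ℓ t₁ - ℓ t₂| ≤ L * |t₁ - t₂|)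
    (hℓanti : ∀ s t : ℝ, s ≤ t → ℓ t ≤ ℓ s)
    (B : ℝ) (hB0 : 0 < B) (hB : ∀ w : Fin c → E, norm2q q w ≤ Λ → ∀ z, auxLoss ℓ φ w z ≤ B)
    (δ : ℝ) (hδ : 0 < δ) (hδ1 : δ < 1) (d : ℕ → Fin c → E) (hd : ∀ k, norm2q q (d k) ≤ Λ)
    (T : ℝ) (hT : T = (c : ℝ) ^ (1 / p) * (∫ x : ℝ, |x| ^ p ∂(gaussianReal 0 1)) ^ (1 / p)) :
    ∃ G0 : Set (Fin n → X × Fin c), MeasurableSet G0 ∧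
      ENNReal.ofReal (1 - δ) ≤ (Measure.pi fun _ : Fin n => P) G0 ∧
      ∀ S ∈ G0, ∀ w ∈ closure (Set.range d), norm2q q w ≤ Λ →
        ∫ z, auxLoss ℓ φ w z ∂P ≤ (1 / (n : ℝ)) * ∑ i, auxLoss ℓ φ w (S i) +
          2 * ((1 / (n : ℝ)) * (√π * L * (Λ * (T * √(∑ i, ‖φ (S i).1‖ ^ 2))))) +
          3 * B * √(Real.log (2 / δ) / (2 * n)) := by
  set μ := Measure.pi fun _ : Fin n => P with hμ
  set r := 3 * B * √(Real.log (2 / δ) / (2 * n)) with hr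
  set Kf : (Fin n → X × Fin c) → ℝ := fun S =>
    2 * ((1 / (n : ℝ)) * (√π * L * (Λ * (T * √(∑ i, ‖φ (S i).1‖ ^ 2))))) with hKf
  have hKm : Measurable Kf := by
    have : Measurable fun S : Fin n → X × Fin c => ∑ i, ‖φ (S i).1‖ ^ 2 :=
      Finset.measurable_sum _ fun i _ =>
        (((hφ.comp measurable_fst).comp (measurable_pi_apply i)).norm).pow_const 2
    have := this.sqrt
    exact ((((this.const_mul _).const_mul _).const_mul _).const_mul _).const_mul _
  have hlm := aux_loss_meas hc ℓ hℓanti φ hφ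
  set bad : ℕ → Set (Fin n → X × Fin c) := fun k => {S |
    (1 / (n : ℝ)) * ∑ i, auxLoss ℓ φ (d k) (S i) + Kf S + r < ∫ z, auxLoss ℓ φ (d k) z ∂P} with hbad
  have hbm : ∀ k, MeasurableSet (bad k) := by
    intro k
    refine measurableSet_lt (((Measurable.const_mul ?_ _).add hKm).add measurable_const)
      measurable_const
    exact Finset.measurable_sum _ fun i _ => (hlm _).comp (measurable_pi_apply i)
  have hacc : ∀ m : ℕ, μ (⋃ k ∈ Set.Iic m, bad k) ≤ ENNReal.ofReal δ := by
    intro m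
    have hf := aux_finite (ι := Fin (m + 1)) P n hn (fun z k => auxLoss ℓ φ (d k) z)
      (fun k => hlm _) B hB0 (fun z k => hℓ₀ _) (fun z k => hB _ (hd k) z) δ hδ hδ1
    refine (measure_mono ?_).trans ((ENNReal.le_ofReal_iff_toReal_le (measure_ne_top _ _) hδ.le).2 hf)
    intro S hS
    simp only [Set.mem_iUnion, Set.mem_Iic] at hS
    obtain ⟨k, hk, hS⟩ := hS
    have h1 : ∫ b, ⨆ k : Fin (m + 1), ∑ i, auxSgn (b i) * auxLoss ℓ φ (d k) (S i)
        ∂(Measure.pi fun _ : Fin n => auxRad) ≤ √π * L * (Λ * ((c : ℝ) ^ (1 / p) *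
        (∫ x : ℝ, |x| ^ p ∂(gaussianReal 0 1)) ^ (1 / p) * √(∑ i, ‖φ (S i).1‖ ^ 2))) :=
      aux_rad_bound (ι := Fin (m + 1)) n c hc φ p q Λ hpq hp hΛ (fun k => d k)
      (fun k => hd k) ℓ L hL hℓLip S
    have h2 := aux_le_sup (fun k : Fin (m + 1) => (∫ z, auxLoss ℓ φ (d k) z ∂P) -
      (1 / (n : ℝ)) * ∑ i, auxLoss ℓ φ (d k) (S i)) ⟨k, by omega⟩
    rw [← hT] at h1
    have h3 := mul_le_mul_of_nonneg_left h1 (by positivity : 0 ≤ 2 * (1 / (n : ℝ)))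
    simp only [hbad, Set.mem_ofPred_eq, hKf] at hS
    simp only [Set.mem_ofPred_eq]
    refine (?_ : r ≤ _)
    rw [mul_assoc, mul_assoc 2 (1 / (n : ℝ))] at h3
    linarith
  have hall : μ (⋃ k, bad k) ≤ ENNReal.ofReal δ := by
    have : (⋃ k, bad k) = ⋃ m : ℕ, ⋃ k ∈ Set.Iic m, bad k := by
      ext S
      simp only [Set.mem_iUnion, Set.mem_Iic]
      exact ⟨fun ⟨k, h⟩ => ⟨k, k, le_rfl, h⟩, fun ⟨_, k, _, h⟩ => ⟨k, h⟩⟩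
    rw [this, Monotone.measure_iUnion]
    · exact iSup_le hacc
    · intro a b hab
      exact Set.biUnion_mono (Set.Iic_subset_Iic.2 hab) fun _ _ => le_rfl
  refine ⟨(⋃ k, bad k)ᶜ, (MeasurableSet.iUnion hbm).compl, ?_, ?_⟩
  · rw [prob_compl_eq_one_sub (MeasurableSet.iUnion hbm), ENNReal.ofReal_sub _ hδ.le,
      ENNReal.ofReal_one]
    exact tsub_le_tsub_left hall _
  · intro S hS w hw hwΛ
    simp only [Set.mem_compl_iff, Set.mem_iUnion, not_exists, hbad, Set.mem_ofPred_eq, not_lt] at hS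
    obtain ⟨u, hu, hlim⟩ := mem_closure_iff_seq_limit.1 hw
    have hle : ∀ k, ∫ z, auxLoss ℓ φ (u k) z ∂P ≤
        (1 / (n : ℝ)) * ∑ i, auxLoss ℓ φ (u k) (S i) + Kf S + r := by
      intro k
      obtain ⟨m, hm⟩ := hu k
      rw [← hm]
      exact hS m
    have huΛ : ∀ k, norm2q q (u k) ≤ Λ := by
      intro k
      obtain ⟨m, hm⟩ := hu k
      rw [← hm]
      exact hd m
    have ht := fun z => aux_loss_tendsto hc ℓ L hL hℓLip φ z u w hlim
    refine le_of_tendsto_of_tendsto' (b := Filter.atTop) ?_ ?_ hle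
    · refine tendsto_integral_of_dominated_convergence (fun _ => B)
        (fun k => (hlm _).aestronglyMeasurable) (integrable_const _)
        (fun k => Filter.Eventually.of_forall fun z => ?_) (Filter.Eventually.of_forall ht)
      rw [Real.norm_eq_abs, abs_of_nonneg (show 0 ≤ auxLoss _ _ _ _ from hℓ₀ _)]
      exact hB _ (huΛ k) z
    · exact (((tendsto_finsetSum _ fun i _ => ht (S i)).const_mul _).add_const _).add_const _

lemma aux_orth_exists {Z : Type*} [MeasurableSpace Z] (P : Measure Z) [IsProbabilityMeasure P]
    (R : Z → Z → Prop) (hR : ∀ z, ∀ᵐ z' ∂P, R z z') (n : ℕ) :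
    ∀ D : Set (Fin n → Z), MeasurableSet D → (Measure.pi fun _ : Fin n => P) D ≠ 0 →
      ∃ S ∈ D, ∀ i j, i < j → R (S i) (S j) := by
  induction n with
  | zero =>
    intro D _ hD
    obtain ⟨S, hS⟩ := nonempty_of_measure_ne_zero hD
    exact ⟨S, hS, fun i => i.elim0⟩
  | succ n ih =>
    intro D hDm hD
    have hmp := (measurePreserving_piFinSuccAbove (fun _ : Fin (n + 1) => P) 0).symm
    have he : ∀ z : Z × (Fin n → Z),
        (MeasurableEquiv.piFinSuccAbove (fun _ : Fin (n + 1) => Z) 0).symm z = Fin.cons z.1 z.2 := by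
      intro z
      simp [MeasurableEquiv.piFinSuccAbove, Fin.insertNthEquiv]
    set D' := (MeasurableEquiv.piFinSuccAbove (fun _ : Fin (n + 1) => Z) 0).symm ⁻¹' D with hD'
    have hD'm : MeasurableSet D' := hmp.measurable hDm
    have hne : (P.prod (Measure.pi fun _ : Fin n => P)) D' ≠ 0 := by
      have := hmp.measure_preimage hDm.nullMeasurableSet
      rw [← this] at hD
      exact hD
    rw [Ne, Measure.measure_prod_null hD'm] at hne
    have : ∃ z, (Measure.pi fun _ : Fin n => P) (Prod.mk z ⁻¹' D') ≠ 0 := by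
      by_contra! hcon
      exact hne (Filter.Eventually.of_forall hcon)
    obtain ⟨z, hz⟩ := this
    have hae : ∀ᵐ t ∂(Measure.pi fun _ : Fin n => P), ∀ i, R z (t i) := by
      rw [ae_all_iff]
      intro i
      exact (measurePreserving_eval (fun _ : Fin n => P) i).quasiMeasurePreserving.ae (hR z)
    set N := toMeasurable (Measure.pi fun _ : Fin n => P) {t | ¬ ∀ i, R z (t i)} with hN
    have hN0 : (Measure.pi fun _ : Fin n => P) N = 0 := by
      rw [hN, measure_toMeasurable]; exact hae
    obtain ⟨t, ht, htR⟩ := ih ((Prod.mk z ⁻¹' D') \ N)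
      ((measurable_prodMk_left hD'm).diff (measurableSet_toMeasurable _ _))
      (by rwa [measure_sdiff_null hN0])
    have hzt : ∀ i, R z (t i) := by
      by_contra hcon
      exact ht.2 (subset_toMeasurable _ _ hcon)
    refine ⟨Fin.cons z t, ?_, ?_⟩
    · have := ht.1
      simp only [hD', Set.mem_preimage] at this
      rwa [he] at this
    · intro i j
      refine Fin.cases ?_ (fun i => ?_) i
      · refine Fin.cases ?_ (fun j => ?_) j
        · intro h; exact absurd h (lt_irrefl _)
        · intro _; simpa using hzt j
      · refine Fin.cases ?_ (fun j => ?_) j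
        · intro h; exact absurd h (Fin.not_lt_zero _)
        · intro h; simpa using htR i j (Fin.succ_lt_succ_iff.1 h)

lemma aux_orth_outer {Z : Type*} [MeasurableSpace Z] (P : Measure Z) [IsProbabilityMeasure P]
    (R : Z → Z → Prop) (hR : ∀ z, ∀ᵐ z' ∂P, R z z') (n : ℕ) (G0 : Set (Fin n → Z))
    (hG : MeasurableSet G0) :
    (Measure.pi fun _ : Fin n => P) G0 ≤
      (Measure.pi fun _ : Fin n => P) (G0 ∩ {S | ∀ i j, i < j → R (S i) (S j)}) := by
  set μ := Measure.pi fun _ : Fin n => P with hμ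
  set O := {S : Fin n → Z | ∀ i j, i < j → R (S i) (S j)} with hO
  set U := toMeasurable μ (G0 ∩ O) with hU
  have h0 : μ (G0 \ U) = 0 := by
    by_contra hcon
    obtain ⟨S, hS, hSR⟩ := aux_orth_exists P R hR n (G0 \ U)
      (hG.diff (measurableSet_toMeasurable _ _)) hcon
    exact hS.2 (subset_toMeasurable _ _ ⟨hS.1, hSR⟩)
  calc μ G0 ≤ μ (U ∪ (G0 \ U)) := measure_mono (by
        intro x hx; by_cases h : x ∈ U
        · exact Or.inl h
        · exact Or.inr ⟨hx, h⟩)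
    _ ≤ μ U + μ (G0 \ U) := measure_union_le _ _
    _ = μ (G0 ∩ O) := by rw [h0, add_zero, hU, measure_toMeasurable]

lemma aux_countable_support {ι : Type*} (a : ι → ℝ) (h : Summable a) :
    (Function.support a).Countable := h.countable_support

lemma aux_E0 {Z E : Type*} [MeasurableSpace Z] [NormedAddCommGroup E] [InnerProductSpace ℝ E]
    [CompleteSpace E] [MeasurableSpace E] [BorelSpace E] (P : Measure Z) [IsProbabilityMeasure P]
    (φ : Z → E) (hφ : Measurable φ) :
    ∃ E0 : Submodule ℝ E, IsClosed (E0 : Set E) ∧ TopologicalSpace.IsSeparable (E0 : Set E) ∧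
      ∀ v ∈ E0ᗮ, ∀ᵐ z ∂P, ⟪v, φ z⟫ = 0 := by
  obtain ⟨s, b, -⟩ := exists_hilbertBasis ℝ E
  have hi : ∀ v : E, Measurable fun x => ⟪v, φ x⟫ := fun v =>
    (continuous_const.inner continuous_id).measurable.comp hφ
  set g : s → Z → ℝ := fun i z => ⟪b i, φ z⟫ ^ 2 / (1 + ‖φ z‖ ^ 2) with hg
  have hgm : ∀ i, Measurable (g i) := fun i =>
    ((hi _).pow_const 2).div ((hφ.norm.pow_const 2).const_add 1)
  have hg0 : ∀ i z, 0 ≤ g i z := fun i z => by positivity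
  have hgs : ∀ (u : Finset s) z, ∑ i ∈ u, g i z ≤ 1 := by
    intro u z
    simp only [hg]
    rw [← Finset.sum_div, div_le_one (by positivity)]
    have := b.orthonormal.sum_inner_products_le (φ z) (s := u)
    simp only [Real.norm_eq_abs, sq_abs] at this
    linarith
  have hgi : ∀ i, Integrable (g i) P := fun i =>
    (integrable_const (1 : ℝ)).mono' (hgm i).aestronglyMeasurable
      (Filter.Eventually.of_forall fun z => by
        rw [Real.norm_eq_abs, abs_of_nonneg (hg0 i z)]
        simpa using hgs {i} z)
  have hsum : Summable fun i => ∫ z, g i z ∂P := by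
    refine summable_of_sum_le (c := 1) (fun i => integral_nonneg (hg0 i)) fun u => ?_
    rw [← integral_finsetSum _ fun i _ => hgi i]
    have := integral_mono (integrable_finsetSum u fun i _ => hgi i)
      (integrable_const (1 : ℝ)) (hgs u) (μ := P)
    simpa using this
  set I0 := Function.support fun i => ∫ z, g i z ∂P with hI0
  have hI0c : I0.Countable := aux_countable_support _ hsum
  refine ⟨(Submodule.span ℝ (b '' I0)).topologicalClosure,
    Submodule.isClosed_topologicalClosure _, ?_, ?_⟩
  · rw [Submodule.topologicalClosure_coe]
    exact ((hI0c.image b).isSeparable.span).closure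
  intro v hv
  have hvI : ∀ i ∈ I0, ⟪v, b i⟫ = 0 := by
    intro i hi
    rw [Submodule.mem_orthogonal'] at hv
    exact hv _ (Submodule.le_topologicalClosure _ (Submodule.subset_span ⟨i, hi, rfl⟩))
  have hJ : (Function.support fun i => ⟪v, b i⟫ * ⟪b i, v⟫).Countable :=
    aux_countable_support _ (b.summable_inner_mul_inner v v)
  have hae : ∀ᵐ z ∂P, ∀ i ∈ (Function.support fun i => ⟪v, b i⟫ * ⟪b i, v⟫), ⟪b i, φ z⟫ = 0 := by
    rw [ae_ball_iff hJ]
    intro i hiJ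
    have hni : i ∉ I0 := by
      intro h
      apply hiJ
      simp [hvI i h]
    have h0 : ∫ z, g i z ∂P = 0 := by simpa [hI0] using hni
    have := (integral_eq_zero_iff_of_nonneg (hg0 i) (hgi i)).1 h0
    filter_upwards [this] with z hz
    have hpos : (1 + ‖φ z‖ ^ 2) ≠ 0 := by positivity
    simpa [hg, hpos] using hz
  filter_upwards [hae] with z hz
  rw [← b.tsum_inner_mul_inner]
  refine (tsum_congr fun i => ?_).trans tsum_zero
  by_cases h : ⟪v, b i⟫ = 0
  · rw [h, zero_mul]
  · rw [hz i, mul_zero]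
    rw [Function.mem_support, real_inner_comm v (b i)]
    exact mul_ne_zero h h

lemma aux_bessel {E : Type*} [NormedAddCommGroup E] [InnerProductSpace ℝ E] (n : ℕ) (b : Fin n → E)
    (hb : ∀ i j, i ≠ j → ⟪b i, b j⟫ = 0) (hb1 : ∀ i, ‖b i‖ ≤ 1) (w : E) :
    ∑ i, ⟪w, b i⟫ ^ 2 ≤ ‖w‖ ^ 2 := by
  set s := ∑ i, ⟪w, b i⟫ • b i with hs
  have h1 : ⟪w, s⟫ = ∑ i, ⟪w, b i⟫ ^ 2 := by
    rw [hs, inner_sum]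
    refine Finset.sum_congr rfl fun i _ => ?_
    rw [inner_smul_right]; ring
  have h2 : ‖s‖ ^ 2 ≤ ∑ i, ⟪w, b i⟫ ^ 2 := by
    rw [← real_inner_self_eq_norm_sq, hs, sum_inner]
    refine Finset.sum_le_sum fun i _ => ?_
    rw [inner_sum, Finset.sum_eq_single i]
    · rw [inner_smul_left, inner_smul_right, real_inner_self_eq_norm_sq]
      have := hb1 i
      have h3 : ‖b i‖ ^ 2 ≤ 1 := by
        have := norm_nonneg (b i)
        nlinarith
      simp only [conj_trivial]
      nlinarith [sq_nonneg ⟪w, b i⟫]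
    · intro j _ hj
      rw [inner_smul_left, inner_smul_right, hb i j hj.symm]; simp
    · simp
  have h3 : 0 ≤ ‖w - s‖ ^ 2 := sq_nonneg _
  rw [norm_sub_sq_real, h1] at h3
  linarith

lemma aux_bessel_sum {E : Type*} [NormedAddCommGroup E] [InnerProductSpace ℝ E] (n c : ℕ)
    (a : Fin n → E) (ha : ∀ i j, i ≠ j → ⟪a i, a j⟫ = 0) (w : Fin c → E) :
    ∑ i, √(∑ j, ⟪w j, a i⟫ ^ 2) ≤ √(∑ i, ‖a i‖ ^ 2) * √(∑ j, ‖w j‖ ^ 2) := by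
  set b : Fin n → E := fun i => ‖a i‖⁻¹ • a i with hb
  have hab : ∀ i, a i = ‖a i‖ • b i := by
    intro i
    by_cases h : a i = 0
    · simp [h]
    · rw [hb]; simp only; rw [smul_smul, mul_inv_cancel₀ (norm_ne_zero_iff.2 h), one_smul]
  have e : ∀ i, √(∑ j, ⟪w j, a i⟫ ^ 2) = ‖a i‖ * √(∑ j, ⟪w j, b i⟫ ^ 2) := by
    intro i
    have : ∑ j, ⟪w j, a i⟫ ^ 2 = ‖a i‖ ^ 2 * ∑ j, ⟪w j, b i⟫ ^ 2 := by
      rw [Finset.mul_sum]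
      refine Finset.sum_congr rfl fun j _ => ?_
      conv_lhs => rw [hab i, inner_smul_right]
      ring
    rw [this, Real.sqrt_mul (sq_nonneg _), Real.sqrt_sq (norm_nonneg _)]
  simp only [e]
  refine (Real.sum_mul_le_sqrt_mul_sqrt _ _ _).trans ?_
  gcongr
  have : ∀ i, √(∑ j, ⟪w j, b i⟫ ^ 2) ^ 2 = ∑ j, ⟪w j, b i⟫ ^ 2 := fun i =>
    Real.sq_sqrt (Finset.sum_nonneg fun _ _ => sq_nonneg _)
  simp only [this]
  rw [Finset.sum_comm]
  refine Finset.sum_le_sum fun j _ => aux_bessel n b (fun i j h => ?_) (fun i => ?_) (w j)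
  · rw [hb]; simp only; rw [inner_smul_left, inner_smul_right, ha i j h]; simp
  · rw [hb]; simp only
    rw [norm_smul, norm_inv, norm_norm]
    exact inv_mul_le_one

lemma aux_l2_le {E : Type*} [NormedAddCommGroup E] {c : ℕ} (q : ℝ) (hq₁ : 1 < q) (hq₂ : q ≤ 2)
    (w : Fin c → E) : √(∑ j, ‖w j‖ ^ 2) ≤ norm2q q w := by
  have hq0 : 0 < q := by linarith
  have hs0 : 0 ≤ ∑ j, ‖w j‖ ^ q := Finset.sum_nonneg fun j _ => by positivity
  have hN0 : 0 ≤ norm2q q w := Real.rpow_nonneg hs0 _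
  have hNq : ∑ j, ‖w j‖ ^ q = norm2q q w ^ q := by
    rw [norm2q, ← Real.rpow_mul hs0, one_div_mul_cancel hq0.ne', Real.rpow_one]
  have hle : ∀ j, ‖w j‖ ≤ norm2q q w := by
    intro j
    rw [← Real.rpow_le_rpow_iff (norm_nonneg _) hN0 hq0, ← hNq]
    exact Finset.single_le_sum (f := fun j => ‖w j‖ ^ q) (fun j _ => by positivity)
      (Finset.mem_univ j)
  have e : ∀ x : ℝ, 0 ≤ x → x ^ 2 = x ^ q * x ^ (2 - q) := by
    intro x hx
    rw [← Real.rpow_add_of_nonneg hx hq0.le (by linarith), ← Real.rpow_natCast]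
    congr 1; push_cast; ring
  apply Real.sqrt_le_iff.2 ⟨hN0, ?_⟩
  calc ∑ j, ‖w j‖ ^ 2 = ∑ j, ‖w j‖ ^ q * ‖w j‖ ^ (2 - q) :=
        Finset.sum_congr rfl fun j _ => e _ (norm_nonneg _)
    _ ≤ ∑ j, ‖w j‖ ^ q * norm2q q w ^ (2 - q) := by
        gcongr with j
        exact hle j
    _ = _ := by rw [← Finset.sum_mul, hNq, ← e _ hN0]

lemma aux_norm2q_mono {E : Type*} [NormedAddCommGroup E] {c : ℕ} (q : ℝ) (hq₁ : 1 < q)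
    (w w' : Fin c → E) (h : ∀ j, ‖w j‖ ≤ ‖w' j‖) : norm2q q w ≤ norm2q q w' := by
  unfold norm2q
  gcongr with j
  · exact h j

/-- **Intermediate generalization bound for the `ℓ_q`-constrained multi-class hypothesis
class** (established inside the proof of Corollary 4): with `q* = q/(q−1)` and
`τ_{q*} = (E|g|^{q*})^{1/q*}` the `q*`-th Gaussian moment, with probability at least `1 − δ`
every `w` with `‖w‖_{2,q} ≤ Λ` satisfies
`R(h^w) ≤ (1/n) Σ_i ℓ(ρ_{h^w}(x_i,y_i)) + (4LΛ c^{1/q*} τ_{q*}/n) √((π q*/2) Σ_i k(x_i,x_i))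
  + 3 B_ℓ √(log(2/δ)/(2n))`. -/
theorem lq_norm_multiclass_generalization_bound
    {X E : Type*} [MeasurableSpace X] [NormedAddCommGroup E] [InnerProductSpace ℝ E]
    [CompleteSpace E] [MeasurableSpace E] [BorelSpace E]
    (n c : ℕ) (hn : 1 ≤ n) (hc : 2 ≤ c)
    (P : Measure (X × Fin c)) [IsProbabilityMeasure P]
    (φ : X → E) (hφ : Measurable φ)
    (q : ℝ) (hq₁ : 1 < q) (hq₂ : q ≤ 2) (Λ : ℝ) (hΛ : 0 < Λ)
    (ℓ : ℝ → ℝ) (L : ℝ)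
    (hℓ₁ : ∀ t ≤ (0 : ℝ), 1 ≤ ℓ t) (hℓ₀ : ∀ t, 0 ≤ ℓ t)
    (hℓLip : ∀ t₁ t₂, |ℓ t₁ - ℓ t₂| ≤ L * |t₁ - t₂|)
    (hℓanti : ∀ s t : ℝ, s ≤ t → ℓ t ≤ ℓ s)
    (hℓzero : ∃ cℓ : ℝ, ℓ cℓ = 0)
    (B : ℝ) (hB : ∀ w : Fin c → E, norm2q q w ≤ Λ →
      ∀ (x : X) (y : Fin c), ℓ (mcMargin (fun x' j => ⟪w j, φ x'⟫) x y) ≤ B)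
    (δ : ℝ) (hδ : δ ∈ Set.Ioo (0 : ℝ) 1) :
    ENNReal.ofReal (1 - δ) ≤
      (Measure.pi fun _ : Fin n => P)
        {S : Fin n → X × Fin c | ∀ w : Fin c → E, norm2q q w ≤ Λ →
          (P {z : X × Fin c | mcMargin (fun x' j => ⟪w j, φ x'⟫) z.1 z.2 ≤ 0}).toReal ≤
            (1 / (n : ℝ)) * ∑ i, ℓ (mcMargin (fun x' j => ⟪w j, φ x'⟫) (S i).1 (S i).2)
            + (4 * L * Λ * (c : ℝ) ^ (1 / (q / (q - 1))) *
                ((∫ x : ℝ, |x| ^ (q / (q - 1)) ∂(gaussianReal 0 1)) ^ (1 / (q / (q - 1)))) / n) *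
              Real.sqrt ((π * (q / (q - 1)) / 2) * ∑ i, ‖φ (S i).1‖ ^ 2)
            + 3 * B * Real.sqrt (Real.log (2 / δ) / (2 * n))} := by
  obtain ⟨hδ0, hδ1⟩ := hδ
  set p := q / (q - 1) with hp
  have hq10 : 0 < q - 1 := by linarith
  have hpq : q.HolderConjugate p := Real.HolderConjugate.conjExponent hq₁
  have hp2 : 2 ≤ p := by rw [hp, le_div_iff₀ hq10]; linarith
  have hn0 : (0 : ℝ) < n := by exact_mod_cast hn
  have hL : 0 < L := by
    obtain ⟨t, ht⟩ := hℓzero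
    have h1 := hℓLip 0 t
    have h2 := hℓ₁ 0 le_rfl
    rw [ht, sub_zero, abs_of_nonneg (hℓ₀ 0)] at h1
    by_contra hcon
    have := mul_nonpos_of_nonpos_of_nonneg (not_lt.1 hcon) (abs_nonneg (0 - t))
    linarith
  have hnorm0 : norm2q q (0 : Fin c → E) ≤ Λ := by
    have : q ≠ 0 := by linarith
    have h2 : q⁻¹ ≠ 0 := inv_ne_zero this
    simp [norm2q, Real.zero_rpow this, Real.zero_rpow h2, hΛ.le]
  have hB0 : 0 < B := by
    obtain ⟨z⟩ := nonempty_of_isProbabilityMeasure P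
    have h1 := hB 0 hnorm0 z.1 z.2
    have h2 : mcMargin (fun x' j => ⟪(0 : Fin c → E) j, φ x'⟫) z.1 z.2 = 0 := by
      simp [mcMargin]
    rw [h2] at h1
    linarith [hℓ₁ 0 le_rfl]
  set τ := ∫ x : ℝ, |x| ^ p ∂(gaussianReal 0 1) with hτ
  have hτ1 : 1 ≤ τ := aux_gauss_ge_one p hp2
  set T := (c : ℝ) ^ (1 / p) * τ ^ (1 / p) with hT
  have hT1 : 1 ≤ T := by
    have hc1 : (1 : ℝ) ≤ c := by exact_mod_cast (by omega : 1 ≤ c)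
    have h1 := Real.one_le_rpow hc1 (by positivity : 0 ≤ 1 / p)
    have h2 := Real.one_le_rpow hτ1 (by positivity : 0 ≤ 1 / p)
    rw [hT]
    nlinarith
  obtain ⟨E0, hE0c, hE0s, hE0⟩ := aux_E0 P (fun z : X × Fin c => φ z.1) (hφ.comp measurable_fst)
  have hcs : CompleteSpace E0 := hE0c.completeSpace_coe
  set K0 : Set (Fin c → E) := {w | (∀ j, w j ∈ E0) ∧ norm2q q w ≤ Λ} with hK0
  have hK0s : TopologicalSpace.IsSeparable K0 :=
    (TopologicalSpace.IsSeparable.univ_pi fun _ : Fin c => hE0s).mono fun w hw j _ => hw.1 j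
  obtain ⟨D, hDK, hDc, hDd⟩ := hK0s.exists_countable_dense_subset
  have hDne : D.Nonempty := by
    have : (0 : Fin c → E) ∈ K0 := ⟨fun j => E0.zero_mem, hnorm0⟩
    exact closure_nonempty_iff.1 ⟨_, hDd this⟩
  obtain ⟨d, hd⟩ := hDc.exists_eq_range hDne
  have hdΛ : ∀ k, norm2q q (d k) ≤ Λ := fun k => (hDK (hd ▸ Set.mem_range_self k)).2
  have hB' : ∀ w : Fin c → E, norm2q q w ≤ Λ → ∀ z, auxLoss ℓ φ w z ≤ B :=
    fun w hw z => hB w hw z.1 z.2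
  obtain ⟨G0, hG0m, hG0P, hG0⟩ := aux_countable n c hn hc P φ hφ p q Λ hpq hp2 hΛ.le ℓ L hL.le hℓ₀
    hℓLip hℓanti B hB0 hB' δ hδ0 hδ1 d hdΛ T hT
  set pr : E → E := fun v => E0.starProjection v with hpr
  have hpr_mem : ∀ v, pr v ∈ E0 := fun v => Submodule.starProjection_apply_mem _ _
  have hpr_orth : ∀ v, v - pr v ∈ E0ᗮ := fun v => Submodule.sub_starProjection_mem_orthogonal v
  have hinner : ∀ v ∈ E0ᗮ, ∀ x, ⟪v, x⟫ = ⟪v, x - pr x⟫ := by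
    intro v hv x
    rw [inner_sub_right, Submodule.inner_left_of_mem_orthogonal (hpr_mem x) hv, sub_zero]
  have hpy : ∀ v, ‖v‖ ^ 2 = ‖pr v‖ ^ 2 + ‖v - pr v‖ ^ 2 := by
    intro v
    have h := Submodule.inner_right_of_mem_orthogonal (hpr_mem v) (hpr_orth v)
    have := norm_add_sq_real (pr v) (v - pr v)
    rw [h, add_sub_cancel] at this
    linarith
  have hpr_le : ∀ v, ‖pr v‖ ≤ ‖v‖ := fun v =>
    abs_le_of_sq_le_sq' (by nlinarith [hpy v, sq_nonneg ‖v - pr v‖]) (norm_nonneg _) |>.2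
  have hpr_le' : ∀ v, ‖v - pr v‖ ≤ ‖v‖ := fun v =>
    abs_le_of_sq_le_sq' (by nlinarith [hpy v, sq_nonneg ‖pr v‖]) (norm_nonneg _) |>.2
  have hout := aux_orth_outer P
    (fun z z' : X × Fin c => ⟪φ z.1 - pr (φ z.1), φ z'.1 - pr (φ z'.1)⟫ = 0)
    (fun z => by
      filter_upwards [hE0 _ (hpr_orth (φ z.1))] with z' hz'
      rw [← hinner _ (hpr_orth _)]
      exact hz') n G0 hG0m
  refine (hG0P.trans hout).trans (measure_mono ?_)
  rintro S ⟨hS, hSO⟩ w hw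
  have hSO' : ∀ i j, i ≠ j →
      ⟪φ (S i).1 - pr (φ (S i).1), φ (S j).1 - pr (φ (S j).1)⟫ = 0 := by
    intro i j hij
    rcases lt_or_gt_of_ne hij with h | h
    · exact hSO i j h
    · rw [real_inner_comm]; exact hSO j i h
  set w0 : Fin c → E := fun j => pr (w j) with hw0
  have hw0Λ : norm2q q w0 ≤ Λ := (aux_norm2q_mono q hq₁ _ _ fun j => hpr_le (w j)).trans hw
  have hw0K : w0 ∈ K0 := ⟨fun j => hpr_mem _, hw0Λ⟩
  have hmain := hG0 S hS w0 (hd ▸ hDd hw0K) hw0Λ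
  have hlm := aux_loss_meas hc ℓ hℓanti φ hφ
  have hli : ∀ v : Fin c → E, norm2q q v ≤ Λ → Integrable (auxLoss ℓ φ v) P := fun v hv =>
    (integrable_const B).mono' (hlm v).aestronglyMeasurable
      (Filter.Eventually.of_forall fun z => by
        rw [Real.norm_eq_abs, abs_of_nonneg (show 0 ≤ auxLoss _ _ _ _ from hℓ₀ _)]; exact hB' v hv z)
  set KS := ∑ i, ‖φ (S i).1‖ ^ 2 with hKS
  have hrisk : (P {z : X × Fin c | mcMargin (fun x' j => ⟪w j, φ x'⟫) z.1 z.2 ≤ 0}).toReal ≤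
      ∫ z, auxLoss ℓ φ w z ∂P := by
    have hms : MeasurableSet {z : X × Fin c | mcMargin (fun x' j => ⟪w j, φ x'⟫) z.1 z.2 ≤ 0} :=
      measurableSet_le (aux_margin_meas hc φ hφ w) measurable_const
    have h1 := integral_indicator_one (μ := P) hms
    change P.real _ ≤ _
    rw [← h1]
    refine integral_mono ((integrable_const (1 : ℝ)).indicator hms) (hli w hw) fun z => ?_
    by_cases hz : z ∈ {z : X × Fin c | mcMargin (fun x' j => ⟪w j, φ x'⟫) z.1 z.2 ≤ 0}
    · rw [Set.indicator_of_mem hz]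
      exact hℓ₁ _ hz
    · rw [Set.indicator_of_notMem hz]
      exact hℓ₀ _
  have hMM : ∫ z, auxLoss ℓ φ w z ∂P = ∫ z, auxLoss ℓ φ w0 z ∂P := by
    refine integral_congr_ae ?_
    have h1 : ∀ᵐ z ∂P, ∀ j, ⟪w j - pr (w j), φ z.1⟫ = 0 :=
      ae_all_iff.2 fun j => hE0 _ (hpr_orth (w j))
    filter_upwards [h1] with z hz
    have h2 := aux_loss_lip hc ℓ L hL.le hℓLip φ w w0 z
    have h3 : ∀ j, ⟪w j, φ z.1⟫ - ⟪w0 j, φ z.1⟫ = 0 := fun j => by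
      rw [← inner_sub_left]; exact hz j
    simp only [h3] at h2
    have h4 : |auxLoss ℓ φ w z - auxLoss ℓ φ w0 z| ≤ 0 := by simpa using h2
    linarith [abs_nonpos_iff.1 h4]
  have hdev : ∑ i, auxLoss ℓ φ w0 (S i) ≤
      ∑ i, auxLoss ℓ φ w (S i) + L * (√2 * (√KS * Λ)) := by
    have h1 : ∀ i, auxLoss ℓ φ w0 (S i) ≤ auxLoss ℓ φ w (S i) +
        L * (√2 * √(∑ j, ⟪w j - pr (w j), φ (S i).1 - pr (φ (S i).1)⟫ ^ 2)) := by
      intro i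
      have h2 := aux_loss_lip hc ℓ L hL.le hℓLip φ w w0 (S i)
      have h3 : ∀ j, ⟪w j, φ (S i).1⟫ - ⟪w0 j, φ (S i).1⟫ =
          ⟪w j - pr (w j), φ (S i).1 - pr (φ (S i).1)⟫ := fun j => by
        rw [← inner_sub_left, ← hinner _ (hpr_orth _)]
      simp only [h3] at h2
      linarith [neg_abs_le (auxLoss ℓ φ w (S i) - auxLoss ℓ φ w0 (S i))]
    refine (Finset.sum_le_sum fun i _ => h1 i).trans ?_
    rw [Finset.sum_add_distrib, ← Finset.mul_sum, ← Finset.mul_sum]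
    gcongr
    refine (aux_bessel_sum n c (fun i => φ (S i).1 - pr (φ (S i).1)) hSO'
      (fun j => w j - pr (w j))).trans ?_
    gcongr
    · refine Finset.sum_le_sum fun i _ => ?_
      have := hpr_le' (φ (S i).1)
      gcongr
    · exact (aux_l2_le q hq₁ hq₂ _).trans
        ((aux_norm2q_mono q hq₁ _ _ fun j => hpr_le' (w j)).trans hw)
  have hdev' := mul_le_mul_of_nonneg_left hdev (by positivity : 0 ≤ 1 / (n : ℝ))
  have hKS0 : 0 ≤ KS := Finset.sum_nonneg fun _ _ => sq_nonneg _
  have hsq : √π * √KS ≤ √(π * p / 2 * KS) := by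
    rw [← Real.sqrt_mul pi_pos.le]
    apply Real.sqrt_le_sqrt
    refine mul_le_mul_of_nonneg_right ?_ hKS0
    nlinarith [pi_pos]
  have hsqpi : √2 ≤ √π := Real.sqrt_le_sqrt (by linarith [pi_gt_three])
  have hnum : 2 * (1 / (n : ℝ) * (√π * L * (Λ * (T * √KS)))) + 1 / (n : ℝ) * (L * (√2 * (√KS * Λ)))
      ≤ (4 * L * Λ * (c : ℝ) ^ (1 / p) * τ ^ (1 / p) / n) * √(π * p / 2 * KS) := by
    have e1 : (4 * L * Λ * (c : ℝ) ^ (1 / p) * τ ^ (1 / p) / n) = 4 * (L * Λ / n) * T := by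
      rw [hT]; ring
    rw [e1]
    have hA : 0 ≤ L * Λ / n := by positivity
    have hk0 := Real.sqrt_nonneg KS
    have s1 : √2 * √KS ≤ √π * √KS * T := by
      have : √2 * √KS ≤ √π * √KS := by gcongr
      have h3 : 0 ≤ √π * √KS := by positivity
      nlinarith
    have s2 : √π * √KS * T ≤ √(π * p / 2 * KS) * T := by gcongr
    calc _ = (L * Λ / n) * (2 * (√π * √KS * T) + √2 * √KS) := by ring
      _ ≤ (L * Λ / n) * (4 * (√(π * p / 2 * KS) * T)) := by
          have s3 : 0 ≤ √π * √KS * T := by positivity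
          gcongr
          linarith
      _ = _ := by ring
  rw [mul_add] at hdev'
  rw [← hMM] at hmain
  change _ ≤ 1 / (n : ℝ) * ∑ i, auxLoss ℓ φ w (S i) + _ + _
  linarith
end
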